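/- Let R be a noetherian regular ring of prime characteristic p and f1, f2 a regular sequence in R. Then for every ideal I ⊆ R and every integer j, the support Supp(H^j_I(R/(f1,f2))) of the j-th local cohomology of R/(f1,f2) is a Zariski-closed subset of Spec R (equivalently has finitely many minimal primes). -/

import Mathlib

/-!
Let `J = (f₁, f₂)`. The Frobenius powers of `I` are cofinal with its ordinary powers, so the local
cohomology `H^j_I(R/J)` is the direct limit of the modules `Ext^j(R/I^[p^e], R/J)`. Frobenius is
flat on a regular ring, so the Frobenius pullbacks of a free resolution of `R/I` resolve the
`R/I^[p^e]`. In the limit they give a complex `G` of modules, each generated up to Frobenius by a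
finite submodule, with `H^j_I(R/J) = H^j(G/JG)`; the complement of the support is the locus where
`G/JG` is exact in degree `j`.

Replacing `G` by the cone of multiplication by `f₂` does not change this locus, since the transition
maps of the cone vanish modulo `f₂` on the second summand, and it makes the cohomology `f₂`-power
torsion. At a prime, exactness of `G/JG` then splits into three conditions: cycles of `G` are
boundaries modulo `J`; the Koszul complex of `f₁, f₂` on the next cohomology module is exact; a
secondary operation on that module, with values in the cohomology after it, vanishes. Each of them
is open, because a module generated up to Frobenius by a finite submodule, with a flat Frobenius
structure, has only finitely many associated primes, and properties stable under Frobenius can be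
tested on the finite submodule.
-/

open IsLocalRing

/-- A noetherian local ring is regular if its Krull dimension equals the dimension of its
cotangent space over the residue field. -/
def IsRegularLocalRingStmt (A : Type u) [CommRing A] [IsLocalRing A] : Prop :=
  ringKrullDim A = (Module.finrank (ResidueField A) (CotangentSpace A) : WithBot (WithTop ℕ))

/-- A commutative ring is regular if it is noetherian and all of its localizations at
primes are regular local rings. -/
def IsRegularRingStmt (R : Type u) [CommRing R] : Prop :=
  IsNoetherianRing R ∧
    ∀ (P : Ideal R) [P.IsPrime], IsRegularLocalRingStmt (Localization.AtPrime P)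

namespace FrobeniusModule

section FrobeniusSpan

variable {R M M' : Type*} [CommRing R] {p : ℕ} [ExpChar R p]
  [AddCommGroup M] [Module R M] [AddCommGroup M'] [Module R M']

/-- The `e`-th iterate of a Frobenius-semilinear map, as a map semilinear over the `e`-th iterate
of the Frobenius of `R`. -/
def iter (φ : M →ₛₗ[frobenius R p] M) (e : ℕ) : M →ₛₗ[iterateFrobenius R p e] M where
  toFun := φ^[e]
  map_add' := iterate_map_add φ e
  map_smul' r x := by
    induction e with
    | zero => simp
    | succ e ih => simp only [Function.iterate_succ_apply', ih, map_smulₛₗ, frobenius_def,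
        iterateFrobenius_def, ← pow_mul, pow_succ]

variable (φ : M →ₛₗ[frobenius R p] M) (φ' : M' →ₛₗ[frobenius R p] M')

@[simp] theorem iter_zero (x : M) : iter φ 0 x = x := rfl

@[simp] theorem iter_one (x : M) : iter φ 1 x = φ x := rfl

theorem iter_succ (e : ℕ) (x : M) : iter φ (e + 1) x = φ (iter φ e x) :=
  Function.iterate_succ_apply' φ e x

theorem iter_succ' (e : ℕ) (x : M) : iter φ (e + 1) x = iter φ e (φ x) :=
  Function.iterate_succ_apply φ e x

theorem iter_smul (e : ℕ) (r : R) (x : M) : iter φ e (r • x) = r ^ p ^ e • iter φ e x := by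
  rw [map_smulₛₗ, iterateFrobenius_def]

theorem iter_mem {φ : M →ₛₗ[frobenius R p] M} {B : Submodule R M} (hB : B ≤ B.comap φ)
    (e : ℕ) {b : M} (hb : b ∈ B) : iter φ e b ∈ B := by
  induction e with
  | zero => exact hb
  | succ e ih => rw [iter_succ]; exact hB ih

variable {φ φ'} in
theorem map_iter {d : M →ₗ[R] M'} (hd : ∀ x, d (φ x) = φ' (d x)) (e : ℕ) (x : M) :
    d (iter φ e x) = iter φ' e (d x) :=
  (show Function.Semiconj d φ φ' from hd).iterate_right e x

/-- The submodule spanned by the `e`-th Frobenius images of the elements of `N`; this is the image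
of the `e`-th Frobenius pullback of `N`. -/
def frobeniusSpan (e : ℕ) (N : Submodule R M) : Submodule R M :=
  Submodule.span R (iter φ e '' N)

variable {φ φ'}

theorem iter_mem_frobeniusSpan (e : ℕ) {N : Submodule R M} {x : M} (hx : x ∈ N) :
    iter φ e x ∈ frobeniusSpan φ e N :=
  Submodule.subset_span ⟨x, hx, rfl⟩

theorem frobeniusSpan_le {e : ℕ} {N B : Submodule R M} :
    frobeniusSpan φ e N ≤ B ↔ N ≤ B.comap (iter φ e) := by
  rw [frobeniusSpan, Submodule.span_le, Set.image_subset_iff]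
  rfl

theorem frobeniusSpan_mono (e : ℕ) {N N' : Submodule R M} (h : N ≤ N') :
    frobeniusSpan φ e N ≤ frobeniusSpan φ e N' :=
  Submodule.span_mono (Set.image_mono h)

theorem frobeniusSpan_span (e : ℕ) (S : Set M) :
    frobeniusSpan φ e (Submodule.span R S) = Submodule.span R (iter φ e '' S) := by
  apply le_antisymm
  · rw [frobeniusSpan_le, Submodule.span_le]
    exact fun x hx => Submodule.subset_span ⟨x, hx, rfl⟩
  · exact Submodule.span_mono (Set.image_mono Submodule.subset_span)

@[simp] theorem frobeniusSpan_zero (N : Submodule R M) : frobeniusSpan φ 0 N = N :=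
  (congrArg _ (Set.image_id _)).trans N.span_eq

theorem frobeniusSpan_sup (e : ℕ) (N N' : Submodule R M) :
    frobeniusSpan φ e (N ⊔ N') = frobeniusSpan φ e N ⊔ frobeniusSpan φ e N' :=
  le_antisymm
    (frobeniusSpan_le.2 (sup_le (frobeniusSpan_le.1 le_sup_left) (frobeniusSpan_le.1 le_sup_right)))
    (sup_le (frobeniusSpan_mono e le_sup_left) (frobeniusSpan_mono e le_sup_right))

theorem frobeniusSpan_frobeniusSpan_one (e : ℕ) (N : Submodule R M) :
    frobeniusSpan φ e (frobeniusSpan φ 1 N) = frobeniusSpan φ (e + 1) N := by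
  conv_lhs => rw [frobeniusSpan.eq_1 φ 1, frobeniusSpan_span, Set.image_image]
  simp only [frobeniusSpan, iter_succ', iter_zero]

theorem frobeniusSpan_one_frobeniusSpan (e : ℕ) (N : Submodule R M) :
    frobeniusSpan φ 1 (frobeniusSpan φ e N) = frobeniusSpan φ (e + 1) N := by
  conv_lhs => rw [frobeniusSpan.eq_1 φ e, frobeniusSpan_span, Set.image_image]
  simp only [frobeniusSpan, iter_succ, iter_zero]

theorem frobeniusSpan_mono_right {N : Submodule R M} (hN : N ≤ frobeniusSpan φ 1 N) :
    Monotone fun e => frobeniusSpan φ e N :=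
  monotone_nat_of_le_succ fun e =>
    (frobeniusSpan_mono e hN).trans (frobeniusSpan_frobeniusSpan_one e N).le

theorem map_frobeniusSpan {d : M →ₗ[R] M'} (hd : ∀ x, d (φ x) = φ' (d x)) (e : ℕ)
    (N : Submodule R M) : (frobeniusSpan φ e N).map d = frobeniusSpan φ' e (N.map d) := by
  simp only [frobeniusSpan, Submodule.map_span, Submodule.map_coe, Set.image_image, map_iter hd]

end FrobeniusSpan

section Relations

variable {R M ι κ : Type*} [CommRing R] {p : ℕ} [ExpChar R p] [AddCommGroup M] [Module R M]

variable (R ι p) in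
/-- The entrywise Frobenius of the free module `ι → R`. -/
def entrywiseFrobenius : (ι → R) →ₛₗ[frobenius R p] (ι → R) where
  toFun v i := v i ^ p
  map_add' v w := funext fun i => add_pow_expChar (v i) (w i) p
  map_smul' r v := funext fun i => mul_pow r (v i) p

theorem iter_entrywiseFrobenius (e : ℕ) (v : ι → R) :
    iter (entrywiseFrobenius R ι p) e v = fun i => v i ^ p ^ e := by
  induction e with
  | zero => simp
  | succ e ih => rw [iter_succ, ih]; funext i; exact (pow_mul (v i) (p ^ e) p).symm

theorem iter_frobenius (e : ℕ) (r : R) : iter (LinearMap.frobenius R R p) e r = r ^ p ^ e :=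
  iterate_frobenius p e r

variable (p) in
/-- The Frobenius power of a submodule of a free module, spanned by the vectors `v ^ (p ^ e)` taken
entrywise. -/
abbrev bracket (e : ℕ) (V : Submodule R (ι → R)) : Submodule R (ι → R) :=
  frobeniusSpan (entrywiseFrobenius R ι p) e V

variable (p) in
/-- The Frobenius power of an ideal, generated by the elements `r ^ (p ^ e)`. -/
abbrev idealBracket (e : ℕ) (I : Ideal R) : Ideal R :=
  frobeniusSpan (LinearMap.frobenius R R p) e I

variable (R) in
/-- The module of linear relations among the members of a finite family. -/
def relations [Fintype ι] (x : ι → M) : Submodule R (ι → R) :=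
  LinearMap.ker (Fintype.linearCombination R x)

theorem mem_relations [Fintype ι] {x : ι → M} {a : ι → R} :
    a ∈ relations R x ↔ ∑ i, a i • x i = 0 := Iff.rfl

theorem linearCombination_iter [Fintype ι] (φ : M →ₛₗ[frobenius R p] M) (e : ℕ) (x : ι → M)
    (v : ι → R) :
    Fintype.linearCombination R (iter φ e ∘ x) (iter (entrywiseFrobenius R ι p) e v) =
      iter φ e (Fintype.linearCombination R x v) := by
  simp [Fintype.linearCombination_apply, iter_entrywiseFrobenius, iterateFrobenius_def]

theorem map_linearCombination_bracket [Fintype ι] (φ : M →ₛₗ[frobenius R p] M) (e : ℕ) (x : ι → M)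
    (V : Submodule R (ι → R)) :
    (bracket p e V).map (Fintype.linearCombination R (iter φ e ∘ x)) =
      frobeniusSpan φ e (V.map (Fintype.linearCombination R x)) := by
  simp only [bracket, frobeniusSpan, Submodule.map_span, Submodule.map_coe, Set.image_image,
    linearCombination_iter]

theorem map_funLeft_bracket (f : κ → ι) (e : ℕ) (V : Submodule R (ι → R)) :
    (bracket p e V).map (LinearMap.funLeft R R f) = bracket p e (V.map (LinearMap.funLeft R R f)) :=
  map_frobeniusSpan (fun _ => rfl) e V

theorem map_proj_bracket (i : ι) (e : ℕ) (V : Submodule R (ι → R)) :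
    (bracket p e V).map (LinearMap.proj i) = idealBracket p e (V.map (LinearMap.proj i)) :=
  map_frobeniusSpan (fun _ => rfl) e V

/-- A Frobenius-semilinear endomorphism reflects relations if every relation among the images of a
finite family is a combination of Frobenius powers of relations of the family itself: its
linearization, from the Frobenius pullback of `M` to `M`, is injective. For the Frobenius
endomorphism of `R` this is the flatness of Frobenius. -/
def ReflectsRelations (φ : M →ₛₗ[frobenius R p] M) : Prop :=
  ∀ ⦃ι : Type⦄ [Fintype ι] (x : ι → M), relations R (φ ∘ x) ≤ bracket p 1 (relations R x)

theorem ReflectsRelations.iterate {φ : M →ₛₗ[frobenius R p] M} (hφ : ReflectsRelations φ) (e : ℕ)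
    {ι : Type} [Fintype ι] (x : ι → M) :
    relations R (iter φ e ∘ x) ≤ bracket p e (relations R x) := by
  induction e with
  | zero => simp [bracket, relations, Function.comp_def]
  | succ e ih =>
    have h : iter φ (e + 1) ∘ x = φ ∘ (iter φ e ∘ x) :=
      funext fun i => iter_succ φ e (x i)
    rw [h, bracket, ← frobeniusSpan_one_frobeniusSpan]
    exact (hφ _).trans (frobeniusSpan_mono 1 ih)

theorem mem_frobeniusSpan_iff {φ : M →ₛₗ[frobenius R p] M} {e : ℕ} {N : Submodule R M} {m : M} :
    m ∈ frobeniusSpan φ e N ↔ ∃ (n : ℕ) (c : Fin n → R) (x : Fin n → M),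
      (∀ i, x i ∈ N) ∧ ∑ i, c i • iter φ e (x i) = m := by
  constructor
  · intro hm
    obtain ⟨n, c, g, rfl⟩ := Submodule.mem_span_set'.1 hm
    choose x hxN hx using fun i => (g i).2
    exact ⟨n, c, x, hxN, by simp only [hx]⟩
  · rintro ⟨n, c, x, hx, rfl⟩
    exact sum_mem fun i _ => Submodule.smul_mem _ _ (iter_mem_frobeniusSpan e (hx i))

theorem mem_frobeniusSpan_span_range_iff {φ : M →ₛₗ[frobenius R p] M} {e : ℕ} [Fintype ι]
    {x : ι → M} {m : M} :
    m ∈ frobeniusSpan φ e (Submodule.span R (Set.range x)) ↔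
      ∃ c : ι → R, ∑ i, c i • iter φ e (x i) = m := by
  rw [frobeniusSpan_span, ← Set.range_comp, Submodule.mem_span_range_iff_exists_fun]
  rfl

theorem ReflectsRelations.colon_frobeniusSpan {φ : M →ₛₗ[frobenius R p] M}
    (hφ : ReflectsRelations φ) (e : ℕ) (N : Submodule R M) (x : M) :
    (frobeniusSpan φ e N).colon {iter φ e x} =
      idealBracket p e (N.colon {x}) := by
  apply le_antisymm
  · intro a ha
    obtain ⟨n, c, y, hy, hsum⟩ := mem_frobeniusSpan_iff.1 (Submodule.mem_colon_singleton.1 ha)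
    let z : Option (Fin n) → M := fun s => s.elim x y
    have hrel : (fun s : Option (Fin n) => s.elim a (-c)) ∈
        relations R (iter φ e ∘ z) := by
      simp [mem_relations, Fintype.sum_option, z, hsum]
    have hmem := Submodule.mem_map_of_mem (f := LinearMap.proj none) (hφ.iterate e z hrel)
    rw [map_proj_bracket] at hmem
    refine frobeniusSpan_mono e ?_ hmem
    rintro _ ⟨r, hr, rfl⟩
    have hr := mem_relations.1 hr
    rw [Fintype.sum_option] at hr
    rw [Submodule.mem_colon_singleton, LinearMap.proj_apply,
      show r none • x = -∑ i, r (some i) • y i from eq_neg_of_add_eq_zero_left hr]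
    exact neg_mem (sum_mem fun i _ => N.smul_mem _ (hy i))
  · rw [idealBracket, frobeniusSpan_le]
    intro a ha
    rw [Submodule.mem_comap, iter_frobenius, Submodule.mem_colon_singleton, ← iter_smul]
    exact iter_mem_frobeniusSpan e (Submodule.mem_colon_singleton.1 ha)

end Relations

section FFinite

variable {R M M' : Type*} [CommRing R] {p : ℕ} [ExpChar R p]
  [AddCommGroup M] [Module R M] [AddCommGroup M'] [Module R M']

/-- An `F`-finite module in the sense of Lyubeznik, with the isomorphism between `M` and its
Frobenius pullback replaced by a Frobenius-semilinear endomorphism `φ` of `M`: injectivity of the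
linearization of `φ` is `reflects`, and `exists_root` provides a finitely generated root. -/
structure IsFFinite (φ : M →ₛₗ[frobenius R p] M) : Prop where
  reflects : ReflectsRelations φ
  exists_root : ∃ N : Submodule R M,
    N.FG ∧ N ≤ frobeniusSpan φ 1 N ∧ ∀ m, ∃ e, m ∈ frobeniusSpan φ e N

variable {φ : M →ₛₗ[frobenius R p] M} {φ' : M' →ₛₗ[frobenius R p] M'}

theorem IsFFinite.exists_fin_root (hφ : IsFFinite φ) :
    ∃ (n : ℕ) (x : Fin n → M), ∀ m, ∃ e, ∀ e' ≥ e,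
      ∃ c : Fin n → R, ∑ i, c i • iter φ e' (x i) = m := by
  obtain ⟨N, hfg, hN, hall⟩ := hφ.exists_root
  obtain ⟨n, x, rfl⟩ := Submodule.fg_iff_exists_fin_generating_family.1 hfg
  refine ⟨n, x, fun m => ?_⟩
  obtain ⟨e, he⟩ := hall m
  exact ⟨e, fun e' hee' =>
    mem_frobeniusSpan_span_range_iff.1 (frobeniusSpan_mono_right hN hee' he)⟩

section Kernel

/-- The restriction of a Frobenius-semilinear map to the kernel of a compatible linear map. -/
def kerMap (d : M →ₗ[R] M') (hd : ∀ x, d (φ x) = φ' (d x)) :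
    LinearMap.ker d →ₛₗ[frobenius R p] LinearMap.ker d :=
  (φ.domRestrict (LinearMap.ker d)).codRestrict (LinearMap.ker d) fun x => by
    rw [LinearMap.mem_ker, LinearMap.domRestrict_apply, hd, LinearMap.mem_ker.1 x.2, map_zero]

variable {d : M →ₗ[R] M'} {hd : ∀ x, d (φ x) = φ' (d x)}

theorem frobeniusSpan_inf_ker_le (hφ' : ReflectsRelations φ') {e : ℕ} {d d' : M →ₗ[R] M'}
    (hd : ∀ x, d' (iter φ e x) = iter φ' e (d x)) (N : Submodule R M) :
    frobeniusSpan φ e N ⊓ LinearMap.ker d' ≤ frobeniusSpan φ e (N ⊓ LinearMap.ker d) := by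
  rintro m ⟨hm, hdm⟩
  obtain ⟨n, c, x, hx, rfl⟩ := mem_frobeniusSpan_iff.1 hm
  have hc : c ∈ relations R (iter φ' e ∘ (d ∘ x)) := by
    simpa [mem_relations, hd] using hdm
  have himage := Submodule.mem_map_of_mem (f := Fintype.linearCombination R (iter φ e ∘ x))
    (hφ'.iterate e (d ∘ x) hc)
  rw [map_linearCombination_bracket] at himage
  refine frobeniusSpan_mono e ?_ himage
  rintro _ ⟨r, hr, rfl⟩
  rw [Fintype.linearCombination_apply]
  refine ⟨sum_mem fun i _ => N.smul_mem _ (hx i), ?_⟩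
  simpa [mem_relations] using hr

theorem map_subtype_frobeniusSpan_kerMap (e : ℕ) (N : Submodule R (LinearMap.ker d)) :
    (frobeniusSpan (kerMap d hd) e N).map (LinearMap.ker d).subtype =
      frobeniusSpan φ e (N.map (LinearMap.ker d).subtype) :=
  map_frobeniusSpan (fun _ => rfl) e N

theorem mem_frobeniusSpan_kerMap (hφ' : ReflectsRelations φ') {e : ℕ} {N : Submodule R M}
    {m : LinearMap.ker d} (hm : (m : M) ∈ frobeniusSpan φ e N) :
    m ∈ frobeniusSpan (kerMap d hd) e (N.comap (LinearMap.ker d).subtype) := by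
  have hmap : (m : M) ∈ (frobeniusSpan (kerMap d hd) e
      (N.comap (LinearMap.ker d).subtype)).map (LinearMap.ker d).subtype := by
    rw [map_subtype_frobeniusSpan_kerMap, Submodule.map_comap_subtype, inf_comm]
    exact frobeniusSpan_inf_ker_le hφ' (map_iter hd e) N ⟨hm, m.2⟩
  obtain ⟨y, hy, hym⟩ := hmap
  exact Subtype.ext hym ▸ hy

theorem ReflectsRelations.kerMap (hφ : ReflectsRelations φ) :
    ReflectsRelations (kerMap d hd) := by
  intro ι _ x a ha
  have hrel : relations R (Subtype.val ∘ x) = relations R x := by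
    ext r
    simp [mem_relations, Subtype.ext_iff]
  have hval := congrArg (LinearMap.ker d).subtype (mem_relations.1 ha)
  rw [map_sum, map_zero] at hval
  exact hrel ▸ hφ (Subtype.val ∘ x) (mem_relations.2 hval)

theorem IsFFinite.kerMap [IsNoetherianRing R] (hφ : IsFFinite φ) (hφ' : ReflectsRelations φ') :
    IsFFinite (kerMap d hd) where
  reflects := hφ.reflects.kerMap
  exists_root := by
    obtain ⟨N, hfg, hN, hall⟩ := hφ.exists_root
    have : IsNoetherian R N := isNoetherian_of_fg_of_noetherian N hfg
    refine ⟨N.comap (LinearMap.ker d).subtype, ?_, ?_, ?_⟩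
    · refine Submodule.fg_of_fg_map_injective _ (LinearMap.ker d).injective_subtype ?_
      exact Submodule.FG.of_le_of_isNoetherian (Submodule.map_comap_le _ N)
    · exact fun m hm => mem_frobeniusSpan_kerMap hφ' (hN hm)
    · exact fun m => (hall m).imp fun e he => mem_frobeniusSpan_kerMap hφ' he

end Kernel

section Cokernel

/-- The Frobenius-semilinear map induced on the cokernel of a compatible linear map. -/
def cokerMap (d : M →ₗ[R] M') (hd : ∀ x, d (φ x) = φ' (d x)) :
    (M' ⧸ LinearMap.range d) →ₛₗ[frobenius R p] (M' ⧸ LinearMap.range d) :=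
  Submodule.mapQ _ _ φ' (by rintro _ ⟨x, rfl⟩; exact ⟨φ x, hd x⟩)

variable {d : M →ₗ[R] M'} {hd : ∀ x, d (φ x) = φ' (d x)}

theorem IsFFinite.exists_fin_iter_of_mem_range (hφ : IsFFinite φ) (hd : ∀ x, d (φ x) = φ' (d x))
    {z : M'} (hz : z ∈ LinearMap.range d) :
    ∃ (n : ℕ) (c : Fin n → R) (t : Fin n → M'),
      (∀ i, t i ∈ LinearMap.range d) ∧ ∑ i, c i • φ' (t i) = z := by
  obtain ⟨t, rfl⟩ := hz
  obtain ⟨n, x, hx⟩ := hφ.exists_fin_root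
  obtain ⟨e, he⟩ := hx t
  obtain ⟨c, rfl⟩ := he (e + 1) e.le_succ
  exact ⟨n, c, fun i => d (iter φ e (x i)), fun i => ⟨_, rfl⟩, by simp [iter_succ, hd]⟩

theorem IsFFinite.reflectsRelations_cokerMap (hφ : IsFFinite φ) (hφ' : ReflectsRelations φ') :
    ReflectsRelations (cokerMap d hd) := by
  intro ι _ x a ha
  obtain ⟨y, rfl⟩ : ∃ y : ι → M', x = (LinearMap.range d).mkQ ∘ y :=
    ⟨fun i => (x i).out, funext fun i => (Submodule.Quotient.mk_out (x i)).symm⟩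
  have hrange : ∑ i, a i • φ' (y i) ∈ LinearMap.range d := by
    rw [← Submodule.ker_mkQ (LinearMap.range d), LinearMap.mem_ker, map_sum]
    exact mem_relations.1 ha
  obtain ⟨n, c, t, ht, hsum⟩ := hφ.exists_fin_iter_of_mem_range hd hrange
  have hrel : Sum.elim a (-c) ∈ relations R (φ' ∘ Sum.elim y t) := by
    simp [mem_relations, Fintype.sum_sum_type, hsum]
  have hmem := Submodule.mem_map_of_mem (f := LinearMap.funLeft R R Sum.inl) (hφ' _ hrel)
  rw [map_funLeft_bracket] at hmem
  refine frobeniusSpan_mono 1 ?_ hmem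
  rintro _ ⟨r, hr, rfl⟩
  have hr := mem_relations.1 hr
  rw [Fintype.sum_sum_type] at hr
  have hy : ∑ i, r (Sum.inl i) • y i ∈ LinearMap.range d := by
    rw [show ∑ i, r (Sum.inl i) • y i = -∑ i, r (Sum.inr i) • t i from
      eq_neg_of_add_eq_zero_left hr]
    exact neg_mem (sum_mem fun i _ => Submodule.smul_mem _ _ (ht i))
  rw [← Submodule.ker_mkQ (LinearMap.range d), LinearMap.mem_ker, map_sum] at hy
  exact mem_relations.2 hy

theorem IsFFinite.cokerMap (hφ : IsFFinite φ) (hφ' : IsFFinite φ') : IsFFinite (cokerMap d hd) where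
  reflects := hφ.reflectsRelations_cokerMap hφ'.reflects
  exists_root := by
    obtain ⟨N, hfg, hN, hall⟩ := hφ'.exists_root
    have hmap : ∀ e, (frobeniusSpan φ' e N).map (LinearMap.range d).mkQ =
        frobeniusSpan (FrobeniusModule.cokerMap d hd) e (N.map (LinearMap.range d).mkQ) :=
      fun e => map_frobeniusSpan (fun _ => rfl) e N
    refine ⟨N.map (LinearMap.range d).mkQ, hfg.map _, ?_, fun m => ?_⟩
    · exact (Submodule.map_mono hN).trans (hmap 1).le
    · obtain ⟨y, rfl⟩ := Submodule.mkQ_surjective _ m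
      obtain ⟨e, he⟩ := hall y
      exact ⟨e, hmap e ▸ Submodule.mem_map_of_mem he⟩

end Cokernel

end FFinite

open scoped Pointwise

section LocalClosure

variable {R M : Type*} [CommRing R] [AddCommGroup M] [Module R M]

/-- The elements of `M` that lie in the submodule `B` after localization at `P`. -/
def localClosure (P : PrimeSpectrum R) (B : Submodule R M) : Submodule R M where
  carrier := {z | ∃ s ∉ P.asIdeal, s • z ∈ B}
  zero_mem' := ⟨1, P.asIdeal.primeCompl.one_mem, by simp⟩
  add_mem' := by
    rintro x y ⟨s, hs, hx⟩ ⟨t, ht, hy⟩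
    refine ⟨s * t, P.asIdeal.primeCompl.mul_mem hs ht, ?_⟩
    rw [smul_add, mul_smul s t y, mul_comm, mul_smul]
    exact add_mem (B.smul_mem t hx) (B.smul_mem s hy)
  smul_mem' := by
    rintro r x ⟨s, hs, hx⟩
    exact ⟨s, hs, smul_comm s r x ▸ B.smul_mem r hx⟩

variable {P : PrimeSpectrum R} {B N : Submodule R M} {z : M}

theorem mem_localClosure : z ∈ localClosure P B ↔ ∃ s ∉ P.asIdeal, s • z ∈ B := Iff.rfl

theorem mem_localClosure_iff_colon : z ∈ localClosure P B ↔ ¬ B.colon {z} ≤ P.asIdeal := by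
  simp only [mem_localClosure, SetLike.not_le_iff_exists, Submodule.mem_colon_singleton, and_comm]

theorem le_localClosure : B ≤ localClosure P B :=
  fun z hz => ⟨1, P.asIdeal.primeCompl.one_mem, by rwa [one_smul]⟩

theorem mem_localClosure_of_smul_mem {s : R} (hs : s ∉ P.asIdeal)
    (h : s • z ∈ localClosure P B) : z ∈ localClosure P B := by
  obtain ⟨t, ht, hz⟩ := h
  exact ⟨t * s, P.asIdeal.primeCompl.mul_mem ht hs, by rwa [mul_smul]⟩

theorem mem_of_forall_mem_localClosure (h : ∀ P, z ∈ localClosure P B) : z ∈ B := by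
  suffices B.colon {z} = ⊤ by simpa using Ideal.eq_top_iff_one _ |>.1 this
  by_contra hne
  obtain ⟨m, hm, hle⟩ := Ideal.exists_le_maximal _ hne
  exact mem_localClosure_iff_colon.1 (h ⟨m, hm.isPrime⟩) hle

theorem isOpen_setOf_mem_localClosure (B : Submodule R M) (z : M) :
    IsOpen {P | z ∈ localClosure P B} := by
  simp only [mem_localClosure_iff_colon]
  exact (PrimeSpectrum.isClosed_zeroLocus (B.colon {z} : Set R)).isOpen_compl

theorem isOpen_setOf_le_localClosure (hN : N.FG) (B : Submodule R M) :
    IsOpen {P | N ≤ localClosure P B} := by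
  obtain ⟨S, hS, rfl⟩ := Submodule.fg_def.1 hN
  have h := hS.isOpen_biInter fun z _ => isOpen_setOf_mem_localClosure B z
  convert h using 1
  ext P
  simp [Submodule.span_le, Set.subset_def]

end LocalClosure

section Openness

variable {R M : Type*} [CommRing R] {p : ℕ} [ExpChar R p] [AddCommGroup M] [Module R M]
  {φ : M →ₛₗ[frobenius R p] M} {B N : Submodule R M}

theorem localClosure_le_comap (hB : B ≤ B.comap φ) (P : PrimeSpectrum R) :
    localClosure P B ≤ (localClosure P B).comap φ := by
  rintro z ⟨s, hs, hz⟩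
  refine ⟨s ^ p, P.asIdeal.primeCompl.pow_mem hs p, ?_⟩
  rw [← frobenius_def, ← map_smulₛₗ]
  exact hB hz

theorem frobeniusSpan_le_of_le_comap (hB : B ≤ B.comap φ) (hN : N ≤ B) (e : ℕ) :
    frobeniusSpan φ e N ≤ B :=
  frobeniusSpan_le.2 fun _ hx => iter_mem hB e (hN hx)

theorem IsFFinite.isOpen_setOf_localClosure_eq_top (hφ : IsFFinite φ) (hB : B ≤ B.comap φ) :
    IsOpen {P | localClosure P B = ⊤} := by
  obtain ⟨N, hfg, -, hall⟩ := hφ.exists_root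
  convert isOpen_setOf_le_localClosure hfg B using 3 with P
  refine ⟨fun h => h ▸ le_top, fun h => eq_top_iff.2 fun z _ => ?_⟩
  obtain ⟨e, he⟩ := hall z
  exact frobeniusSpan_le_of_le_comap (localClosure_le_comap hB P) h e he

end Openness

section AssociatedPrimes

theorem associatedPrimes_sup_span_singleton_subset {R M : Type*} [CommRing R] [AddCommGroup M]
    [Module R M] (N : Submodule R M) (x : M) :
    associatedPrimes R ↥(N ⊔ R ∙ x) ⊆
      associatedPrimes R N ∪ associatedPrimes R (R ⧸ N.colon {x}) := by
  let f : N →ₗ[R] ↥(N ⊔ R ∙ x) := Submodule.inclusion le_sup_left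
  let g : ↥(N ⊔ R ∙ x) →ₗ[R] R ∙ N.mkQ x :=
    (N.mkQ.domRestrict _).codRestrict _ fun y => by
      have hy := Submodule.mem_map_of_mem (f := N.mkQ) y.2
      rwa [Submodule.map_sup, Submodule.map_span, Set.image_singleton, Submodule.mkQ_map_self,
        bot_sup_eq] at hy
  have hfg : Function.Exact f g := by
    rw [LinearMap.exact_iff, Submodule.range_inclusion]
    exact (LinearMap.ker_codRestrict _ _ _).trans
      ((LinearMap.ker_domRestrict _ _).trans (congrArg _ N.ker_mkQ))
  have hcolon : N.colon {x} = Ideal.torsionOf R (M ⧸ N) (N.mkQ x) := by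
    ext r
    simp [← Submodule.Quotient.mk_smul]
  rw [hcolon, LinearEquiv.AssociatedPrimes.eq (Ideal.quotTorsionOfEquivSpanSingleton R _ (N.mkQ x))]
  exact associatedPrimes.subset_union_of_exact (Submodule.inclusion_injective _) hfg

variable {R M : Type*} [CommRing R] {p : ℕ} [ExpChar R p] [AddCommGroup M] [Module R M]
  {φ : M →ₛₗ[frobenius R p] M}

theorem pow_mem_idealBracket (e : ℕ) {I : Ideal R} {a : R} (ha : a ∈ I) :
    a ^ p ^ e ∈ idealBracket p e I :=
  iter_frobenius (p := p) e a ▸ iter_mem_frobeniusSpan e ha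

theorem radical_idealBracket (e : ℕ) (I : Ideal R) : (idealBracket p e I).radical = I.radical := by
  have hq : p ^ e ≠ 0 := pow_ne_zero e (expChar_ne_zero R p)
  apply le_antisymm
  · refine Ideal.radical_mono (frobeniusSpan_le.2 fun a ha => ?_)
    rw [Submodule.mem_comap, iter_frobenius]
    exact I.pow_mem_of_mem ha _ (Nat.pos_of_ne_zero hq)
  · exact Ideal.radical_le_radical_iff.2 fun a ha => ⟨p ^ e, pow_mem_idealBracket e ha⟩

theorem isPrimary_idealBracket (hflat : ReflectsRelations (LinearMap.frobenius R R p)) (e : ℕ)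
    (P : Ideal R) [hP : P.IsPrime] : (idealBracket p e P).IsPrimary := by
  have hrad : (idealBracket p e P).radical = P := (radical_idealBracket e P).trans hP.radical
  refine Ideal.isPrimary_iff.2 ⟨fun htop => hP.ne_top ?_, fun {x y} hxy => ?_⟩
  · rw [← hrad, htop, Ideal.radical_top]
  · rw [hrad, or_iff_not_imp_right]
    intro hy
    have hcolon : P.colon {y} = P := by
      ext r
      rw [Submodule.mem_colon_singleton, smul_eq_mul, hP.mul_mem_iff_mem_or_mem, or_iff_left hy]
    rw [← hcolon, ← hflat.colon_frobeniusSpan, Submodule.mem_colon_singleton, iter_frobenius,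
      smul_eq_mul]
    have hdvd : y ∣ y ^ p ^ e := dvd_pow_self y (pow_ne_zero e (expChar_ne_zero R p))
    exact Ideal.mem_of_dvd _ (mul_dvd_mul_left x hdvd) hxy

theorem associatedPrimes_quotient_idealBracket_subset
    (hflat : ReflectsRelations (LinearMap.frobenius R R p)) (e : ℕ) (P : Ideal R)
    [hP : P.IsPrime] : associatedPrimes R (R ⧸ idealBracket p e P) ⊆ {P} := fun Q hQ => by
  rw [hQ.eq_radical (isPrimary_idealBracket hflat e P), radical_idealBracket, hP.radical]
  exact rfl

theorem fg_induction_of_isPrime_colon [IsNoetherianRing R] {N : Submodule R M} (hN : N.FG)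
    {motive : Submodule R M → Prop} (bot : motive ⊥)
    (sup_span : ∀ N' x, (N'.colon {x}).IsPrime → motive N' → motive (N' ⊔ R ∙ x)) : motive N := by
  have : IsNoetherian R N := isNoetherian_of_fg_of_noetherian N hN
  obtain ⟨N', hN', hmax⟩ := set_has_maximal_iff_noetherian.2 this
    {N' : Submodule R N | motive (N'.map N.subtype)}
    ⟨⊥, by rwa [Set.mem_ofPred_eq, Submodule.map_bot]⟩
  suffices N' = ⊤ by rwa [Set.mem_ofPred_eq, this, Submodule.map_subtype_top] at hN'
  by_contra hne
  have : Nontrivial (N ⧸ N') := Submodule.Quotient.nontrivial_iff.2 hne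
  obtain ⟨P, hP⟩ := associatedPrimes.nonempty R (N ⧸ N')
  obtain ⟨hPp, z, rfl⟩ := isAssociatedPrime_iff.1 hP
  obtain ⟨x, rfl⟩ := Submodule.Quotient.mk_surjective _ z
  have hcolon : (N'.map N.subtype).colon {(x : M)} = (⊥ : Submodule R _).colon {N'.mkQ x} := by
    ext r
    rw [Submodule.mem_colon_singleton, Submodule.mem_colon_singleton, Submodule.mem_bot,
      ← map_smul, Submodule.mkQ_apply, Submodule.Quotient.mk_eq_zero]
    exact N.injective_subtype.mem_set_image (s := N') (a := r • x)
  have hx : x ∉ N' := fun h => hPp.ne_top <| by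
    rw [(Submodule.Quotient.mk_eq_zero N').2 h, Submodule.colon_singleton_zero]
  refine hmax (N' ⊔ R ∙ x) ?_ (left_lt_sup.2 fun h => hx (h (Submodule.mem_span_singleton_self x)))
  rw [Set.mem_ofPred_eq, Submodule.map_sup, Submodule.map_span, Set.image_singleton]
  exact sup_span _ _ (hcolon ▸ hPp) hN'

theorem finite_iUnion_associatedPrimes_frobeniusSpan [IsNoetherianRing R]
    (hflat : ReflectsRelations (LinearMap.frobenius R R p)) (hφ : ReflectsRelations φ)
    {N : Submodule R M} (hN : N.FG) :
    (⋃ e, associatedPrimes R (frobeniusSpan φ e N)).Finite := by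
  refine fg_induction_of_isPrime_colon hN
    (motive := fun N => (⋃ e, associatedPrimes R (frobeniusSpan φ e N)).Finite) ?_
    fun N x hprime ih => ?_
  · have h (e : ℕ) : associatedPrimes R (frobeniusSpan φ e (⊥ : Submodule R M)) = ∅ := by
      rw [eq_bot_iff.2 (frobeniusSpan_le.2 bot_le : frobeniusSpan φ e ⊥ ≤ ⊥)]
      exact associatedPrimes.eq_empty_of_subsingleton
    simp only [h, Set.iUnion_empty, Set.finite_empty]
  · refine (ih.union (Set.finite_singleton (N.colon {x}))).subset (Set.iUnion_subset fun e => ?_)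
    rw [frobeniusSpan_sup, frobeniusSpan_span, Set.image_singleton]
    refine (associatedPrimes_sup_span_singleton_subset _ _).trans
      (Set.union_subset_union (Set.subset_iUnion_of_subset e subset_rfl) ?_)
    rw [hφ.colon_frobeniusSpan]
    exact associatedPrimes_quotient_idealBracket_subset hflat e _

theorem IsFFinite.finite_associatedPrimes [IsNoetherianRing R]
    (hflat : ReflectsRelations (LinearMap.frobenius R R p)) (hφ : IsFFinite φ) :
    (associatedPrimes R M).Finite := by
  obtain ⟨N, hfg, -, hall⟩ := hφ.exists_root
  refine (finite_iUnion_associatedPrimes_frobeniusSpan hflat hφ.reflects hfg).subset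
    fun Q hQ => ?_
  obtain ⟨hQp, y, hy⟩ := isAssociatedPrime_iff.1 hQ
  obtain ⟨e, he⟩ := hall y
  refine Set.mem_iUnion.2 ⟨e, isAssociatedPrime_iff.2 ⟨hQp, ⟨y, he⟩, ?_⟩⟩
  ext r
  simp [hy, Submodule.mem_colon_singleton, Subtype.ext_iff]

theorem isOpen_setOf_le_localClosure_bot [IsNoetherianRing R] (hM : (associatedPrimes R M).Finite)
    (V : Submodule R M) : IsOpen {P | V ≤ localClosure P (⊥ : Submodule R M)} := by
  have hV : (associatedPrimes R V).Finite :=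
    hM.subset (associatedPrimes.subset_of_injective V.injective_subtype)
  rw [← isClosed_compl_iff]
  convert hV.isClosed_biUnion fun Q _ => PrimeSpectrum.isClosed_zeroLocus (Q : Set R) using 1
  ext P
  rw [Set.mem_compl_iff, Set.mem_ofPred_eq, SetLike.not_le_iff_exists, Set.mem_iUnion₂]
  simp only [mem_localClosure_iff_colon, not_not]
  constructor
  · rintro ⟨w, hwV, hw⟩
    rw [Submodule.bot_colon'] at hw
    obtain ⟨Q, hQ, hQP⟩ := Ideal.exists_minimalPrimes_le hw
    have hle : R ∙ w ≤ V := (Submodule.span_singleton_le_iff_mem w V).2 hwV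
    refine ⟨Q, associatedPrimes.subset_of_injective (Submodule.inclusion_injective hle) ?_, hQP⟩
    exact Module.associatedPrimes.minimalPrimes_annihilator_subset_associatedPrimes R _ hQ
  · rintro ⟨Q, hQ, hQP⟩
    obtain ⟨-, y, rfl⟩ := isAssociatedPrime_iff.1 hQ
    refine ⟨y, y.2, fun r hr => hQP ?_⟩
    simpa [Submodule.mem_colon_singleton, Subtype.ext_iff] using hr

end AssociatedPrimes

section Koszul

variable {R M : Type*} [CommRing R] [AddCommGroup M] [Module R M]

/-- Exactness in the middle of the Koszul complex `M → M × M → M` of `f₁, f₂` after localization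
at `P`. -/
def KoszulExactAt (P : PrimeSpectrum R) (f₁ f₂ : R) (M : Type*) [AddCommGroup M] [Module R M] :
    Prop :=
  ∀ u v : M, f₁ • u + f₂ • v = 0 →
    ∃ s ∉ P.asIdeal, ∃ t : M, s • u = f₂ • t ∧ s • v = -(f₁ • t)

variable {P : PrimeSpectrum R} {f₁ f₂ : R}

theorem mem_localClosure_smul {f : R} {N : Submodule R M} {z : M} :
    z ∈ localClosure P (f • N) ↔ ∃ s ∉ P.asIdeal, ∃ t ∈ N, s • z = f • t := by
  simp only [mem_localClosure, Submodule.mem_smul_pointwise_iff_exists, eq_comm]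

/-- If `f₂` is locally nilpotent on `M`, dividing by `f₁` modulo a power of `f₂` is unconditional
and exactness lowers that power one step at a time. -/
theorem KoszulExactAt.localClosure_smul_top (h : KoszulExactAt P f₁ f₂ M)
    (htor : ∀ m : M, ∃ k : ℕ, f₂ ^ k • m = 0) :
    localClosure P (f₁ • (⊤ : Submodule R M)) = ⊤ := by
  suffices ∀ (k : ℕ) (m : M), f₂ ^ k • m ∈ f₁ • (⊤ : Submodule R M) →
      m ∈ localClosure P (f₁ • (⊤ : Submodule R M)) by
    refine eq_top_iff.2 fun m _ => ?_
    obtain ⟨k, hk⟩ := htor m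
    exact this k m (hk ▸ zero_mem _)
  intro k
  induction k with
  | zero => exact fun m hm => le_localClosure (by simpa using hm)
  | succ k ih =>
    intro m hm
    obtain ⟨t, -, ht⟩ := (Submodule.mem_smul_pointwise_iff_exists _ _ _).1 hm
    obtain ⟨s, hs, t', -, ht'⟩ := h (-t) (f₂ ^ k • m) (by
      rw [smul_neg, ht, smul_smul, ← pow_succ', neg_add_cancel])
    refine mem_localClosure_of_smul_mem hs (ih (s • m) ?_)
    rw [smul_comm, ht', ← smul_neg]
    exact Submodule.smul_mem_pointwise_smul _ _ _ trivial

theorem koszulExactAt_iff (htor : ∀ m : M, ∃ k : ℕ, f₂ ^ k • m = 0) :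
    KoszulExactAt P f₁ f₂ M ↔ localClosure P (f₁ • (⊤ : Submodule R M)) = ⊤ ∧
      Submodule.torsionBy R M f₁ ≤ localClosure P (f₂ • Submodule.torsionBy R M f₁) := by
  constructor
  · refine fun h => ⟨h.localClosure_smul_top htor, fun x hx => ?_⟩
    obtain ⟨s, hs, t, hst, ht⟩ := h x 0 (by simpa using hx)
    exact mem_localClosure_smul.2 ⟨s, hs, t, by simpa using ht.symm, hst⟩
  · rintro ⟨htop, htors⟩ u v huv
    obtain ⟨s, hs, y, -, hy⟩ := mem_localClosure_smul.1 (htop ▸ Submodule.mem_top : v ∈ _)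
    have hu : s • u + f₂ • y ∈ Submodule.torsionBy R M f₁ := by
      rw [Submodule.mem_torsionBy_iff, smul_add, smul_comm f₁ f₂, ← hy, smul_comm f₁, smul_comm f₂,
        ← smul_add, huv, smul_zero]
    obtain ⟨s', hs', t, ht, hst⟩ := mem_localClosure_smul.1 (htors hu)
    refine ⟨s' * s, P.asIdeal.primeCompl.mul_mem hs' hs, t - s' • y, ?_, ?_⟩
    · rw [smul_sub, ← hst, smul_add, smul_comm f₂, add_sub_cancel_right, mul_smul]
    · rw [mul_smul, hy, smul_sub, (Submodule.mem_torsionBy_iff _ _).1 ht, zero_sub, neg_neg,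
        smul_comm]

end Koszul

section KoszulOpenness

variable {R M : Type*} [CommRing R] {p : ℕ} [ExpChar R p] [AddCommGroup M] [Module R M]
  {φ : M →ₛₗ[frobenius R p] M}

theorem smul_pow_smul_apply (f : R) (x : M) : f • (f ^ (p - 1) • φ) x = φ (f • x) := by
  rw [LinearMap.smul_apply, smul_smul, ← pow_succ', Nat.sub_add_cancel (expChar_pos R p),
    map_smulₛₗ, frobenius_def]

theorem smul_le_comap {B : Submodule R M} (hB : B ≤ B.comap φ) (f : R) :
    f • B ≤ (f • B).comap φ := by
  rintro _ ⟨x, hx, rfl⟩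
  change φ (f • x) ∈ f • B
  rw [← smul_pow_smul_apply]
  exact Submodule.smul_mem_pointwise_smul _ _ _ (B.smul_mem _ (hB hx))

theorem torsionBy_le_comap (f : R) :
    Submodule.torsionBy R M f ≤ (Submodule.torsionBy R M f).comap (f ^ (p - 1) • φ) := by
  intro x hx
  rw [Submodule.mem_comap, Submodule.mem_torsionBy_iff, smul_pow_smul_apply,
    (Submodule.mem_torsionBy_iff f x).1 hx, map_zero]

variable {n : ℕ} {x y : Fin n → M} {f g : R}

theorem map_linearCombination_relations_le_torsionBy (hxy : ∀ i, g • x i = f • y i) :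
    (relations R x).map (Fintype.linearCombination R y) ≤ Submodule.torsionBy R M f := by
  rintro _ ⟨r, hr, rfl⟩
  rw [Submodule.mem_torsionBy_iff, Fintype.linearCombination_apply, Finset.smul_sum]
  simp only [smul_comm f (r _), ← hxy, smul_comm _ g, ← Finset.smul_sum, mem_relations.1 hr,
    smul_zero]

/-- The relations among the generators `x`, evaluated at `y = (g / f) • x`, generate the
`f`-torsion under `f ^ (p - 1) • φ` once `g` is inverted. -/
theorem ReflectsRelations.smul_mem_frobeniusSpan (hφ : ReflectsRelations φ)
    (hxy : ∀ i, g • x i = f • y i) (e : ℕ) {c : Fin n → R}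
    (hc : f • ∑ i, c i • iter φ e (x i) = 0) :
    g ^ p ^ e • ∑ i, c i • iter φ e (x i) ∈ frobeniusSpan (f ^ (p - 1) • φ) e
      ((relations R x).map (Fintype.linearCombination R y)) := by
  have hrel : f • c ∈ bracket p e (relations R x) := by
    refine hφ.iterate e x (mem_relations.2 ?_)
    simpa only [Pi.smul_apply, Function.comp_apply, smul_assoc, Finset.smul_sum] using hc
  have hmem := Submodule.mem_map_of_mem
    (f := Fintype.linearCombination R (iter (f ^ (p - 1) • φ) e ∘ y)) hrel
  rw [map_linearCombination_bracket] at hmem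
  convert hmem using 1
  have hiter (i : Fin n) : f • iter (f ^ (p - 1) • φ) e (y i) = g ^ p ^ e • iter φ e (x i) := by
    rw [← iter_smul, hxy]
    exact map_iter (d := LinearMap.lsmul R M f) (smul_pow_smul_apply f) e (y i)
  simp only [Fintype.linearCombination_apply, Function.comp_apply, Pi.smul_apply, smul_eq_mul,
    mul_smul, smul_comm f (c _), hiter, Finset.smul_sum, smul_comm (g ^ p ^ e)]

theorem exists_notMem_smul_mem {P : PrimeSpectrum R} {B : Submodule R M}
    (h : localClosure P B = ⊤) (x : Fin n → M) : ∃ g ∉ P.asIdeal, ∀ i, g • x i ∈ B := by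
  choose s hs hsx using fun i => (h ▸ Submodule.mem_top : x i ∈ localClosure P B)
  refine ⟨∏ i, s i, P.asIdeal.primeCompl.prod_mem fun i _ => hs i, fun i => ?_⟩
  rw [← Finset.prod_erase_mul _ _ (Finset.mem_univ i), mul_smul]
  exact B.smul_mem _ (hsx i)

theorem IsFFinite.isOpen_setOf_koszulExactAt [IsNoetherianRing R] (hφ : IsFFinite φ) (f₁ f₂ : R)
    (htor : ∀ m : M, ∃ k : ℕ, f₂ ^ k • m = 0) : IsOpen {P | KoszulExactAt P f₁ f₂ M} := by
  simp only [koszulExactAt_iff htor]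
  refine isOpen_iff_forall_mem_open.2 fun P ⟨htop, htors⟩ => ?_
  obtain ⟨n, x, hx⟩ := hφ.exists_fin_root
  obtain ⟨g, hgP, hg⟩ := exists_notMem_smul_mem htop x
  choose y hxy using fun i => (Submodule.mem_smul_pointwise_iff_exists _ _ _).1 (hg i)
  replace hxy := fun i => (hxy i).2.symm
  have hfg : ((relations R x).map (Fintype.linearCombination R y)).FG :=
    (IsNoetherian.noetherian _).map _
  have hle := map_linearCombination_relations_le_torsionBy hxy
  have hopen := (hφ.isOpen_setOf_localClosure_eq_top
      (smul_le_comap (f := f₁) (le_top : (⊤ : Submodule R M) ≤ Submodule.comap φ ⊤))).inter <|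
    (PrimeSpectrum.basicOpen g).isOpen.inter <|
      isOpen_setOf_le_localClosure hfg (f₂ • Submodule.torsionBy R M f₁)
  refine ⟨_, ?_, hopen, htop, hgP, hle.trans htors⟩
  rintro Q ⟨hQtop, hgQ, hQ⟩
  refine ⟨hQtop, fun u hu => ?_⟩
  obtain ⟨e, he⟩ := hx u
  obtain ⟨c, rfl⟩ := he e le_rfl
  refine mem_localClosure_of_smul_mem (Q.asIdeal.primeCompl.pow_mem hgQ (p ^ e)) ?_
  exact frobeniusSpan_le_of_le_comap
    (localClosure_le_comap (smul_le_comap (torsionBy_le_comap f₁) f₂) Q) hQ e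
    (hφ.reflects.smul_mem_frobeniusSpan hxy e hu)

end KoszulOpenness

section ReductionExactness

variable {R : Type*} [CommRing R]

/-- Exactness in the middle of the Koszul complex `M → M × M → M` of `f₁, f₂`. -/
def KoszulExact (f₁ f₂ : R) (M : Type*) [AddCommGroup M] [Module R M] : Prop :=
  ∀ u v : M, f₁ • u + f₂ • v = 0 → ∃ t : M, u = f₂ • t ∧ v = -(f₁ • t)

variable {G₀ G₁ G₂ G₃ : Type*} [AddCommGroup G₀] [Module R G₀] [AddCommGroup G₁] [Module R G₁]
  [AddCommGroup G₂] [Module R G₂] [AddCommGroup G₃] [Module R G₃]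

/-- Exactness at `G₁ / J G₁` of the reduction modulo `J` of `G₀ → G₁ → G₂`, after localization
at `P`. -/
def ExactModAt (P : PrimeSpectrum R) (J : Ideal R) (d₀ : G₀ →ₗ[R] G₁) (d₁ : G₁ →ₗ[R] G₂) : Prop :=
  (J • (⊤ : Submodule R G₂)).comap d₁ ≤
    localClosure P (LinearMap.range d₀ ⊔ J • (⊤ : Submodule R G₁))

/-- The elements `w` of `G₃` for which `(f₂ • w, -(f₁ • w))` is the image of a pair `(u, v)` whose
combination `f₁ • u + f₂ • v` bounds. Modulo the image of `d₂` they are the values of a secondary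
connecting map of the Koszul filtration of `G / (f₁, f₂) G`. -/
def secondaryValues (f₁ f₂ : R) (d₁ : G₁ →ₗ[R] G₂) (d₂ : G₂ →ₗ[R] G₃) : Set G₃ :=
  {w | ∃ z u v, d₁ z = f₁ • u + f₂ • v ∧ d₂ u = f₂ • w ∧ d₂ v = -(f₁ • w)}

variable {P : PrimeSpectrum R} {f₁ f₂ : R} {d₀ : G₀ →ₗ[R] G₁} {d₁ : G₁ →ₗ[R] G₂}
  {d₂ : G₂ →ₗ[R] G₃}

theorem mem_span_pair_smul_top {x : G₁} :
    x ∈ Ideal.span {f₁, f₂} • (⊤ : Submodule R G₁) ↔ ∃ u v, x = f₁ • u + f₂ • v := by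
  rw [Ideal.span_insert, Submodule.sup_smul, Submodule.ideal_span_singleton_smul,
    Submodule.ideal_span_singleton_smul]
  simp [Submodule.mem_sup, Submodule.mem_smul_pointwise_iff_exists, eq_comm]

theorem koszulExactAt_quotient_iff {B : Submodule R G₁} : KoszulExactAt P f₁ f₂ (G₁ ⧸ B) ↔
    ∀ u v, f₁ • u + f₂ • v ∈ B →
      ∃ s ∉ P.asIdeal, ∃ t, s • u - f₂ • t ∈ B ∧ s • v + f₁ • t ∈ B := by
  simp only [KoszulExactAt, (Submodule.mkQ_surjective B).forall,
    (Submodule.mkQ_surjective B).exists, ← map_smul, ← map_add, ← map_neg]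
  simp only [Submodule.mkQ_apply, Submodule.Quotient.mk_eq_zero, Submodule.Quotient.eq,
    sub_neg_eq_add]

theorem ExactModAt.exists_smul_eq (h : ExactModAt P (Ideal.span {f₁, f₂}) d₀ d₁)
    (h₁₀ : ∀ x, d₁ (d₀ x) = 0) (hK : KoszulExact f₁ f₂ G₂) {z : G₁} {u v : G₂}
    (hz : d₁ z = f₁ • u + f₂ • v) :
    ∃ s ∉ P.asIdeal, ∃ t u' v', s • u = f₂ • t + d₁ u' ∧ s • v = -(f₁ • t) + d₁ v' := by
  obtain ⟨s, hs, hsz⟩ := h (mem_span_pair_smul_top.2 ⟨u, v, hz⟩)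
  obtain ⟨_, ⟨y, rfl⟩, x, hx, hsz⟩ := Submodule.mem_sup.1 hsz
  obtain ⟨u', v', rfl⟩ := mem_span_pair_smul_top.1 hx
  have hzero : f₁ • (s • u - d₁ u') + f₂ • (s • v - d₁ v') = 0 := by
    have hd := congrArg d₁ hsz.symm
    simp only [map_add, map_smul, h₁₀, hz, zero_add] at hd
    rw [smul_sub, smul_sub, sub_add_sub_comm, ← hd, smul_add, smul_comm f₁, smul_comm f₂, sub_self]
  obtain ⟨t, hu, hv⟩ := hK _ _ hzero
  exact ⟨s, hs, t, u', v', sub_eq_iff_eq_add.1 hu, sub_eq_iff_eq_add.1 hv⟩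

theorem ExactModAt.koszulExactAt_homology (h : ExactModAt P (Ideal.span {f₁, f₂}) d₀ d₁)
    (h₁₀ : ∀ x, d₁ (d₀ x) = 0) (h₂₁ : ∀ x, d₂ (d₁ x) = 0) (hK : KoszulExact f₁ f₂ G₂)
    (hinj : ∀ x : G₃, f₁ • x = 0 → x = 0) :
    KoszulExactAt P f₁ f₂
      (LinearMap.ker d₂ ⧸ LinearMap.range (d₁.codRestrict (LinearMap.ker d₂) h₂₁)) := by
  refine koszulExactAt_quotient_iff.2 fun u v ⟨z, hz⟩ => ?_
  obtain ⟨s, hs, t, u', v', hu, hv⟩ := h.exists_smul_eq h₁₀ hK (congrArg Subtype.val hz)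
  have ht : d₂ t = 0 := hinj _ <| by
    simpa [h₂₁] using congrArg d₂ hv
  refine ⟨s, hs, ⟨t, ht⟩, ⟨u', Subtype.ext ?_⟩, ⟨v', Subtype.ext ?_⟩⟩
  · exact (sub_eq_iff_eq_add'.2 hu).symm
  · exact (by rw [Submodule.coe_add, Submodule.coe_smul, hv, Submodule.coe_smul]; abel)

theorem ExactModAt.secondaryValues_subset (h : ExactModAt P (Ideal.span {f₁, f₂}) d₀ d₁)
    (h₁₀ : ∀ x, d₁ (d₀ x) = 0) (h₂₁ : ∀ x, d₂ (d₁ x) = 0) (hK : KoszulExact f₁ f₂ G₂)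
    (hinj : ∀ x : G₃, f₁ • x = 0 → x = 0) :
    secondaryValues f₁ f₂ d₁ d₂ ⊆ localClosure P (LinearMap.range d₂) := by
  rintro w ⟨z, u, v, hz, -, hv⟩
  obtain ⟨s, hs, t, u', v', -, hv'⟩ := h.exists_smul_eq h₁₀ hK hz
  refine ⟨s, hs, t, sub_eq_zero.1 (hinj _ ?_)⟩
  have hd := congrArg d₂ hv'
  rw [map_smul, hv, map_add, h₂₁, add_zero, map_neg, map_smul, smul_neg, neg_inj, smul_comm] at hd
  rw [smul_sub, hd, sub_self]

theorem exists_smul_add_of_secondaryValues_subset (h₂₁ : ∀ x, d₂ (d₁ x) = 0)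
    (hK : KoszulExact f₁ f₂ G₃)
    (hsec : secondaryValues f₁ f₂ d₁ d₂ ⊆ localClosure P (LinearMap.range d₂))
    {z : G₁} {u v : G₂} (hz : d₁ z = f₁ • u + f₂ • v) :
    ∃ s ∉ P.asIdeal, ∃ w, s • u - f₂ • w ∈ LinearMap.ker d₂ ∧
      s • v + f₁ • w ∈ LinearMap.ker d₂ := by
  obtain ⟨t, hu, hv⟩ := hK (d₂ u) (d₂ v) (by rw [← map_smul, ← map_smul, ← map_add, ← hz, h₂₁])
  obtain ⟨s, hs, w, hw⟩ := hsec ⟨z, u, v, hz, hu, hv⟩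
  refine ⟨s, hs, w, ?_, ?_⟩
  · rw [LinearMap.mem_ker, map_sub, map_smul, map_smul, hw, hu, smul_comm, sub_self]
  · rw [LinearMap.mem_ker, map_add, map_smul, map_smul, hw, hv, smul_neg, smul_comm, neg_add_cancel]

theorem exactModAt_of_koszulExactAt_homology (h₂₁ : ∀ x, d₂ (d₁ x) = 0)
    (hK : KoszulExact f₁ f₂ G₃)
    (hker : LinearMap.ker d₁ ≤
      localClosure P (LinearMap.range d₀ ⊔ Ideal.span {f₁, f₂} • (⊤ : Submodule R G₁)))
    (hH : KoszulExactAt P f₁ f₂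
      (LinearMap.ker d₂ ⧸ LinearMap.range (d₁.codRestrict (LinearMap.ker d₂) h₂₁)))
    (hsec : secondaryValues f₁ f₂ d₁ d₂ ⊆ localClosure P (LinearMap.range d₂)) :
    ExactModAt P (Ideal.span {f₁, f₂}) d₀ d₁ := by
  intro z hzJ
  obtain ⟨u, v, hz⟩ := mem_span_pair_smul_top.1 hzJ
  obtain ⟨s, hs, w, hu, hv⟩ := exists_smul_add_of_secondaryValues_subset h₂₁ hK hsec hz
  have hsz : d₁ (s • z) = f₁ • (s • u - f₂ • w) + f₂ • (s • v + f₁ • w) := by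
    rw [map_smul, hz]
    module
  obtain ⟨s', hs', t, ⟨u', hu'⟩, ⟨v', hv'⟩⟩ :=
    koszulExactAt_quotient_iff.1 hH ⟨_, hu⟩ ⟨_, hv⟩ ⟨s • z, Subtype.ext hsz⟩
  have hu' : d₁ u' = s' • (s • u - f₂ • w) - f₂ • t.1 := congrArg Subtype.val hu'
  have hv' : d₁ v' = s' • (s • v + f₁ • w) + f₁ • t.1 := congrArg Subtype.val hv'
  have hcycle : s' • s • z - (f₁ • u' + f₂ • v') ∈ LinearMap.ker d₁ := by
    rw [LinearMap.mem_ker, map_sub, map_smul, hsz, map_add, map_smul, map_smul, hu', hv']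
    module
  refine mem_localClosure_of_smul_mem (P.asIdeal.primeCompl.mul_mem hs' hs) ?_
  rw [mul_smul, ← sub_add_cancel (s' • s • z) (f₁ • u' + f₂ • v')]
  exact add_mem (hker hcycle)
    (le_localClosure (Submodule.mem_sup_right (mem_span_pair_smul_top.2 ⟨u', v', rfl⟩)))

theorem exactModAt_iff (h₁₀ : ∀ x, d₁ (d₀ x) = 0) (h₂₁ : ∀ x, d₂ (d₁ x) = 0)
    (hK₂ : KoszulExact f₁ f₂ G₂) (hK₃ : KoszulExact f₁ f₂ G₃)
    (hinj : ∀ x : G₃, f₁ • x = 0 → x = 0) :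
    ExactModAt P (Ideal.span {f₁, f₂}) d₀ d₁ ↔
      LinearMap.ker d₁ ≤
        localClosure P (LinearMap.range d₀ ⊔ Ideal.span {f₁, f₂} • (⊤ : Submodule R G₁)) ∧
      KoszulExactAt P f₁ f₂
        (LinearMap.ker d₂ ⧸ LinearMap.range (d₁.codRestrict (LinearMap.ker d₂) h₂₁)) ∧
      secondaryValues f₁ f₂ d₁ d₂ ⊆ localClosure P (LinearMap.range d₂) :=
  ⟨fun h => ⟨(Submodule.comap_mono bot_le).trans h, h.koszulExactAt_homology h₁₀ h₂₁ hK₂ hinj,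
    h.secondaryValues_subset h₁₀ h₂₁ hK₂ hinj⟩,
    fun ⟨h₁, h₂, h₃⟩ => exactModAt_of_koszulExactAt_homology h₂₁ hK₃ h₁ h₂ h₃⟩

end ReductionExactness

section ReductionOpenness

variable {R : Type*} [CommRing R] {p : ℕ} [ExpChar R p]
  {G₀ G₁ G₂ G₃ : Type*} [AddCommGroup G₀] [Module R G₀] [AddCommGroup G₁] [Module R G₁]
  [AddCommGroup G₂] [Module R G₂] [AddCommGroup G₃] [Module R G₃]
  {φ₀ : G₀ →ₛₗ[frobenius R p] G₀} {φ₁ : G₁ →ₛₗ[frobenius R p] G₁}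
  {φ₂ : G₂ →ₛₗ[frobenius R p] G₂} {φ₃ : G₃ →ₛₗ[frobenius R p] G₃}
  {d₀ : G₀ →ₗ[R] G₁} {d₁ : G₁ →ₗ[R] G₂} {d₂ : G₂ →ₗ[R] G₃}

theorem range_sup_smul_top_le_comap (hd₀ : ∀ x, d₀ (φ₀ x) = φ₁ (d₀ x)) (J : Ideal R) :
    LinearMap.range d₀ ⊔ J • ⊤ ≤ (LinearMap.range d₀ ⊔ J • ⊤).comap φ₁ := by
  refine sup_le ?_ (Submodule.smul_le.2 fun r hr x _ => ?_)
  · rintro _ ⟨x, rfl⟩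
    exact Submodule.mem_sup_left ⟨φ₀ x, hd₀ x⟩
  · rw [Submodule.mem_comap, map_smulₛₗ, frobenius_def]
    exact Submodule.mem_sup_right (Submodule.smul_mem_smul
      (J.pow_mem_of_mem hr p (expChar_pos R p)) trivial)

theorem isOpen_setOf_ker_le_localClosure [IsNoetherianRing R] (hφ₁ : IsFFinite φ₁)
    (hφ₂ : ReflectsRelations φ₂) (hd₁ : ∀ x, d₁ (φ₁ x) = φ₂ (d₁ x)) {B : Submodule R G₁}
    (hB : B ≤ B.comap φ₁) : IsOpen {P | LinearMap.ker d₁ ≤ localClosure P B} := by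
  have hstable : B.comap (LinearMap.ker d₁).subtype ≤
      (B.comap (LinearMap.ker d₁).subtype).comap (kerMap d₁ hd₁) := fun _ hx => hB hx
  convert (hφ₁.kerMap hφ₂).isOpen_setOf_localClosure_eq_top hstable using 3 with P
  exact ⟨fun h => eq_top_iff.2 fun x _ => h x.2, fun h x hx => (h ▸ trivial :
    (⟨x, hx⟩ : LinearMap.ker d₁) ∈ localClosure P (B.comap (LinearMap.ker d₁).subtype))⟩

theorem isOpen_setOf_subset_localClosure [IsNoetherianRing R]
    (hflat : ReflectsRelations (LinearMap.frobenius R R p)) (hφ₁ : IsFFinite φ₁)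
    (hφ₂ : IsFFinite φ₂) (hd₁ : ∀ x, d₁ (φ₁ x) = φ₂ (d₁ x)) (S : Set G₂) :
    IsOpen {P | S ⊆ localClosure P (LinearMap.range d₁)} := by
  have hC : IsFFinite (cokerMap d₁ hd₁) := hφ₁.cokerMap hφ₂
  convert isOpen_setOf_le_localClosure_bot (hC.finite_associatedPrimes hflat)
    (Submodule.span R ((LinearMap.range d₁).mkQ '' S)) using 3 with P
  rw [Submodule.span_le, Set.image_subset_iff]
  simp only [Set.subset_def, Set.mem_preimage, SetLike.mem_coe, mem_localClosure, Submodule.mem_bot,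
    ← map_smul]
  simp only [Submodule.mkQ_apply, Submodule.Quotient.mk_eq_zero]

theorem isOpen_setOf_exactModAt [IsNoetherianRing R]
    (hflat : ReflectsRelations (LinearMap.frobenius R R p))
    (hφ₁ : IsFFinite φ₁) (hφ₂ : IsFFinite φ₂) (hφ₃ : IsFFinite φ₃)
    (hd₀ : ∀ x, d₀ (φ₀ x) = φ₁ (d₀ x)) (hd₁ : ∀ x, d₁ (φ₁ x) = φ₂ (d₁ x))
    (hd₂ : ∀ x, d₂ (φ₂ x) = φ₃ (d₂ x)) (h₁₀ : ∀ x, d₁ (d₀ x) = 0) (h₂₁ : ∀ x, d₂ (d₁ x) = 0)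
    {f₁ f₂ : R} (hK₂ : KoszulExact f₁ f₂ G₂) (hK₃ : KoszulExact f₁ f₂ G₃)
    (hinj : ∀ x : G₃, f₁ • x = 0 → x = 0)
    (htor : ∀ z, d₂ z = 0 → ∃ k : ℕ, f₂ ^ k • z ∈ LinearMap.range d₁) :
    IsOpen {P | ExactModAt P (Ideal.span {f₁, f₂}) d₀ d₁} := by
  simp only [exactModAt_iff h₁₀ h₂₁ hK₂ hK₃ hinj]
  have hd₁' (x : G₁) : d₁.codRestrict (LinearMap.ker d₂) h₂₁ (φ₁ x) =
      kerMap d₂ hd₂ (d₁.codRestrict (LinearMap.ker d₂) h₂₁ x) := Subtype.ext (hd₁ x)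
  have hH : IsFFinite (cokerMap _ hd₁') := hφ₁.cokerMap (hφ₂.kerMap hφ₃.reflects)
  refine (isOpen_setOf_ker_le_localClosure hφ₁ hφ₂.reflects hd₁
    (range_sup_smul_top_le_comap hd₀ _)).inter (.inter (hH.isOpen_setOf_koszulExactAt f₁ f₂ ?_)
    (isOpen_setOf_subset_localClosure hflat hφ₂ hφ₃ hd₂ _))
  intro m
  obtain ⟨z, rfl⟩ := Submodule.mkQ_surjective _ m
  obtain ⟨k, t, ht⟩ := htor z z.2
  refine ⟨k, ?_⟩
  rw [← map_smul, Submodule.mkQ_apply, Submodule.Quotient.mk_eq_zero]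
  exact ⟨t, Subtype.ext ht⟩

end ReductionOpenness

section EntrywiseFrobenius

variable {R ι : Type*} [CommRing R] {p : ℕ} [ExpChar R p]

theorem entrywiseFrobenius_single [DecidableEq ι] (e : ℕ) (i : ι) :
    iter (entrywiseFrobenius R ι p) e (Pi.single i 1) = Pi.single i 1 := by
  rw [iter_entrywiseFrobenius]
  funext j
  rw [Pi.apply_single (fun _ (r : R) => r ^ p ^ e)
    (fun _ => zero_pow (pow_ne_zero e (expChar_ne_zero R p))), one_pow]

theorem bracket_top [Finite ι] (e : ℕ) : bracket p e (⊤ : Submodule R (ι → R)) = ⊤ := by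
  classical
  have := Fintype.ofFinite ι
  refine top_le_iff.1 ((Pi.basisFun R ι).span_eq.ge.trans (Submodule.span_le.2 ?_))
  rintro _ ⟨i, rfl⟩
  rw [Pi.basisFun_apply, ← entrywiseFrobenius_single (p := p) e i]
  exact iter_mem_frobeniusSpan e Submodule.mem_top

theorem ReflectsRelations.entrywiseFrobenius [Finite ι]
    (hflat : ReflectsRelations (LinearMap.frobenius R R p)) :
    ReflectsRelations (entrywiseFrobenius R ι p) := by
  intro κ _ x a ha
  have := Fintype.ofFinite ι
  have hcoord (s : Finset ι) : a ∈ bracket p 1 (⨅ i ∈ s, relations R fun k => x k i) := by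
    classical
    induction s using Finset.induction_on with
    | empty => simp [bracket_top]
    | insert i s _ ih =>
      rw [Finset.iInf_insert, inf_comm]
      refine frobeniusSpan_inf_ker_le hflat
        (linearCombination_iter (LinearMap.frobenius R R p) 1 fun k => x k i) _ ⟨ih, ?_⟩
      have hi := congrFun ha i
      rwa [Fintype.linearCombination_apply, Finset.sum_apply] at hi
  refine frobeniusSpan_mono 1 (fun r hr => ?_) (hcoord Finset.univ)
  simp only [Finset.mem_univ, iInf_pos, Submodule.mem_iInf, mem_relations] at hr
  exact mem_relations.2 (funext fun i => by simpa using hr i)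

end EntrywiseFrobenius

section Transition

open Matrix

variable {R ι κ : Type*} [CommRing R] (p : ℕ) [ExpChar R p]

/-- The matrix obtained by raising all entries to the power `p ^ e`, that is, the base change of a
matrix along the `e`-th iterate of Frobenius. -/
abbrev frobeniusPow (e : ℕ) (A : Matrix ι κ R) : Matrix ι κ R :=
  A.map (iterateFrobenius R p e)

theorem frobeniusPow_frobeniusPow (e e' : ℕ) (A : Matrix ι κ R) :
    frobeniusPow p e (frobeniusPow p e' A) = frobeniusPow p (e + e') A := by
  ext i j
  exact (iterateFrobenius_add_apply R p e e' (A i j)).symm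

theorem frobeniusPow_mul {l : Type*} [Fintype ι] (e : ℕ) (A : Matrix κ ι R) (B : Matrix ι l R) :
    frobeniusPow p e (A * B) = frobeniusPow p e A * frobeniusPow p e B :=
  Matrix.map_mul

theorem frobeniusPow_succ_mulVec [Fintype κ] (e : ℕ) (A : Matrix ι κ R) (v : κ → R) :
    frobeniusPow p (e + 1) A *ᵥ entrywiseFrobenius R κ p v =
      entrywiseFrobenius R ι p (frobeniusPow p e A *ᵥ v) := by
  funext i
  simp only [mulVec, dotProduct, entrywiseFrobenius, LinearMap.coe_mk, AddHom.coe_mk, map_apply]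
  rw [← frobenius_def, map_sum]
  simp only [iterateFrobenius_def, frobenius_def, mul_pow, pow_succ, pow_mul]

variable {p} {T : Matrix ι ι R} {S : Matrix κ κ R} {D : Matrix κ ι R}

theorem frobeniusPow_mul_frobeniusPow [Fintype ι] [Fintype κ]
    (h : frobeniusPow p 1 D * T = S * D) (e : ℕ) :
    frobeniusPow p e S * frobeniusPow p e D = frobeniusPow p (e + 1) D * frobeniusPow p e T := by
  rw [← frobeniusPow_mul, ← h, frobeniusPow_mul, frobeniusPow_frobeniusPow]

variable [Fintype ι] [DecidableEq ι] [Fintype κ] [DecidableEq κ]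

variable (p) in
/-- A square matrix `T` determines a morphism from a free module to its Frobenius pullback.
This is its composite with the successive pullbacks, from the `e`-th to the `(e + k)`-th pullback
of the free module. -/
def transition (T : Matrix ι ι R) (e : ℕ) : ℕ → Matrix ι ι R
  | 0 => 1
  | k + 1 => frobeniusPow p (e + k) T * transition T e k

theorem transition_add (e k l : ℕ) :
    transition p T e (k + l) = transition p T (e + k) l * transition p T e k := by
  induction l with
  | zero => simp [transition]
  | succ l ih => rw [← add_assoc, transition, ih, transition, Matrix.mul_assoc, add_assoc]

theorem transition_succ_mulVec (e k : ℕ) (v : ι → R) :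
    transition p T (e + 1) k *ᵥ entrywiseFrobenius R ι p v =
      entrywiseFrobenius R ι p (transition p T e k *ᵥ v) := by
  induction k with
  | zero => simp [transition]
  | succ k ih =>
    rw [transition, transition, ← mulVec_mulVec, ih, add_right_comm, frobeniusPow_succ_mulVec,
      mulVec_mulVec]

theorem transition_mul_frobeniusPow (h : frobeniusPow p 1 D * T = S * D) (e k : ℕ) :
    transition p S e k * frobeniusPow p e D = frobeniusPow p (e + k) D * transition p T e k := by
  induction k with
  | zero => simp [transition]
  | succ k ih =>
    rw [transition, transition, Matrix.mul_assoc, ih, ← Matrix.mul_assoc,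
      frobeniusPow_mul_frobeniusPow h, Matrix.mul_assoc, add_assoc]

end Transition

section FrobeniusLimit

open Matrix

variable {R ι κ : Type*} [CommRing R] {p : ℕ} [ExpChar R p]
  [Fintype ι] [DecidableEq ι] [Fintype κ] [DecidableEq κ]

variable (p) in
/-- The transition map between two levels of the direct system generated by a square matrix. -/
def transitionMap (T : Matrix ι ι R) (i j : ℕ) (_ : i ≤ j) : (ι → R) →ₗ[R] (ι → R) :=
  (transition p T i (j - i)).mulVecLin

instance (T : Matrix ι ι R) :
    DirectedSystem (fun _ : ℕ => ι → R) (transitionMap p T · · ·) where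
  map_self i x := by simp [transitionMap, transition]
  map_map _ _ _ hij hjk x := by
    obtain ⟨k, rfl⟩ := Nat.exists_eq_add_of_le hij
    obtain ⟨l, rfl⟩ := Nat.exists_eq_add_of_le hjk
    simp only [transitionMap, mulVecLin_apply, mulVec_mulVec, Nat.add_sub_cancel_left]
    rw [add_assoc, Nat.add_sub_cancel_left, transition_add]

variable (p) in
/-- The `F`-module generated by the morphism with matrix `T` from a free module to its Frobenius
pullback: the direct limit of the iterated pullbacks of that morphism. -/
abbrev FrobeniusLimit (T : Matrix ι ι R) : Type _ :=
  DirectLimit (fun _ : ℕ => ι → R) (transitionMap p T)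

namespace FrobeniusLimit

variable {T : Matrix ι ι R} {S : Matrix κ κ R}

variable (p T) in
/-- The canonical map from the `e`-th level to the direct limit. -/
noncomputable def of (e : ℕ) : (ι → R) →ₗ[R] FrobeniusLimit p T :=
  DirectLimit.Module.of R ℕ _ (transitionMap p T) e

theorem of_transition (e k : ℕ) (v : ι → R) :
    of p T (e + k) (transition p T e k *ᵥ v) = of p T e v := by
  refine Eq.trans ?_ (DirectLimit.eq_of_le (f := transitionMap p T) ⟨e, v⟩ (e + k) le_self_add).symm
  simp [transitionMap, of]

theorem of_eq_zero_iff {e : ℕ} {v : ι → R} :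
    of p T e v = 0 ↔ ∃ k, transition p T e k *ᵥ v = 0 := by
  refine ⟨fun h => ?_, fun ⟨k, hk⟩ => by rw [← of_transition e k, hk, map_zero]⟩
  rw [DirectLimit.zero_def e] at h
  obtain ⟨i, hi, hi', h⟩ := Quotient.exact h
  exact ⟨i - e, h.trans (map_zero _)⟩

theorem of_eq_of_iff {e : ℕ} {v w : ι → R} :
    of p T e v = of p T e w ↔ ∃ k, transition p T e k *ᵥ v = transition p T e k *ᵥ w := by
  simp only [← sub_eq_zero (b := of p T e w), ← map_sub, of_eq_zero_iff, mulVec_sub, sub_eq_zero]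

theorem exists_of {α : Type*} [Finite α] (z : α → FrobeniusLimit p T) :
    ∃ e, ∃ v : α → ι → R, ∀ a, of p T e (v a) = z a := by
  have := Fintype.ofFinite α
  choose e v hv using fun a => DirectLimit.exists_eq_mk _ (z a)
  have hle (a : α) : e a ≤ Finset.univ.sup e := Finset.le_sup (Finset.mem_univ a)
  refine ⟨Finset.univ.sup e, fun a => transitionMap p T _ _ (hle a) (v a), fun a => ?_⟩
  exact (DirectLimit.eq_of_le (f := transitionMap p T) ⟨e a, v a⟩ _ (hle a)).symm.trans (hv a).symm

variable (p T) in
/-- The Frobenius-semilinear endomorphism of the direct limit that raises the entries of a vector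
to the power `p` and shifts the level by one. -/
noncomputable def frobenius : FrobeniusLimit p T →ₛₗ[_root_.frobenius R p] FrobeniusLimit p T where
  toFun := DirectLimit.lift _ (fun e v => of p T (e + 1) (entrywiseFrobenius R ι p v)) <| by
    intro i j hij v
    obtain ⟨k, rfl⟩ := Nat.exists_eq_add_of_le hij
    rw [transitionMap, Nat.add_sub_cancel_left, mulVecLin_apply, ← transition_succ_mulVec,
      add_right_comm, of_transition]
  map_add' := DirectLimit.induction₂ _ fun e v w => by
    simp only [DirectLimit.add_def, DirectLimit.lift_def, map_add]
  map_smul' r := DirectLimit.induction _ fun e v => by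
    simp only [DirectLimit.smul_def, DirectLimit.lift_def, map_smul, map_smulₛₗ, frobenius_def]

theorem frobenius_of (e : ℕ) (v : ι → R) :
    frobenius p T (of p T e v) = of p T (e + 1) (entrywiseFrobenius R ι p v) := rfl

theorem iter_frobenius_of (e k : ℕ) (v : ι → R) :
    iter (frobenius p T) k (of p T e v) =
      of p T (e + k) (iter (entrywiseFrobenius R ι p) k v) := by
  induction k with
  | zero => rfl
  | succ k ih => rw [iter_succ, ih, frobenius_of, iter_succ, add_assoc]

theorem reflectsRelations_frobenius (hflat : ReflectsRelations (LinearMap.frobenius R R p)) :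
    ReflectsRelations (frobenius p T) := by
  intro α _ z a ha
  obtain ⟨e, v, hv⟩ := exists_of z
  obtain rfl : of p T e ∘ v = z := funext hv
  have hzero : of p T (e + 1) (∑ i, a i • entrywiseFrobenius R ι p (v i)) = 0 := by
    simp only [map_sum, map_smul]
    exact ha
  obtain ⟨k, hk⟩ := of_eq_zero_iff.1 hzero
  have hrel : a ∈ relations R
      (entrywiseFrobenius R ι p ∘ fun i => transition p T e k *ᵥ v i) := by
    rw [← mulVecLin_apply, map_sum] at hk
    simp only [map_smul, mulVecLin_apply, transition_succ_mulVec] at hk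
    exact hk
  refine frobeniusSpan_mono 1 (fun r hr => ?_) (hflat.entrywiseFrobenius _ hrel)
  have hr := congrArg (of p T (e + k)) (mem_relations.1 hr)
  simp only [map_sum, map_smul, of_transition, map_zero] at hr
  exact hr

theorem range_of (e : ℕ) :
    LinearMap.range (of p T e) = frobeniusSpan (frobenius p T) e (LinearMap.range (of p T 0)) := by
  conv_lhs => rw [LinearMap.range_eq_map, ← bracket_top (p := p) e]
  rw [LinearMap.range_eq_map]
  simp only [bracket, frobeniusSpan, Submodule.map_span, Submodule.map_coe, Set.image_image,
    iter_frobenius_of, zero_add]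

theorem range_of_mono : Monotone fun e => LinearMap.range (of p T e) := by
  refine monotone_nat_of_le_succ fun e => ?_
  rintro _ ⟨v, rfl⟩
  exact ⟨_, of_transition e 1 v⟩

theorem isFFinite_frobenius (hflat : ReflectsRelations (LinearMap.frobenius R R p)) :
    IsFFinite (frobenius p T) where
  reflects := reflectsRelations_frobenius hflat
  exists_root := by
    refine ⟨LinearMap.range (of p T 0), ?_, ?_, fun z => ?_⟩
    · exact LinearMap.range_eq_map (of p T 0) ▸ Module.Finite.fg_top.map _
    · rw [← range_of]
      exact range_of_mono zero_le_one
    · obtain ⟨e, v, hv⟩ := exists_of (p := p) fun _ : Unit => z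
      exact ⟨e, range_of (p := p) (T := T) e ▸ ⟨v (), hv ()⟩⟩

end FrobeniusLimit

end FrobeniusLimit

section SMulTop

open Matrix

variable {R ι κ : Type*} [CommRing R] {J : Ideal R} {x : ι → R}

theorem mem_smul_top_iff_forall_apply_mem [Finite ι] :
    x ∈ J • (⊤ : Submodule R (ι → R)) ↔ ∀ i, x i ∈ J := by
  refine ⟨fun hx i => ?_, fun hx => ?_⟩
  · refine Submodule.smul_induction_on hx (fun r hr y _ => J.mul_mem_right _ hr) fun y z hy hz => ?_
    exact J.add_mem hy hz
  · have := Fintype.ofFinite ι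
    classical
    rw [pi_eq_sum_univ' x]
    exact Submodule.sum_mem _ fun i _ => Submodule.smul_mem_smul (hx i) trivial

theorem mulVec_mem_smul_top [Fintype ι] [Finite κ] (A : Matrix κ ι R)
    (hx : x ∈ J • (⊤ : Submodule R (ι → R))) : A *ᵥ x ∈ J • (⊤ : Submodule R (κ → R)) :=
  mem_smul_top_iff_forall_apply_mem.2 fun _ =>
    sum_mem fun i _ => J.mul_mem_left _ (mem_smul_top_iff_forall_apply_mem.1 hx i)

end SMulTop

section LimitMap

open Matrix

variable {R ι κ l : Type*} [CommRing R] {p : ℕ} [ExpChar R p] [Fintype ι] [DecidableEq ι]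
  [Fintype κ] [DecidableEq κ] [Fintype l] [DecidableEq l]
  {T : Matrix ι ι R} {S : Matrix κ κ R} {V : Matrix l l R} {D : Matrix κ ι R} {E : Matrix l κ R}

namespace FrobeniusLimit

/-- The linear map of direct limits induced by a matrix compatible with the generating morphisms. -/
noncomputable def map (D : Matrix κ ι R) (h : frobeniusPow p 1 D * T = S * D) :
    FrobeniusLimit p T →ₗ[R] FrobeniusLimit p S :=
  DirectLimit.Module.lift R ℕ _ (transitionMap p T)
    (fun e => of p S e ∘ₗ (frobeniusPow p e D).mulVecLin) <| by
    intro i j hij v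
    obtain ⟨k, rfl⟩ := Nat.exists_eq_add_of_le hij
    simp only [transitionMap, Nat.add_sub_cancel_left, LinearMap.comp_apply, mulVecLin_apply,
      mulVec_mulVec, ← transition_mul_frobeniusPow h]
    rw [← mulVec_mulVec, of_transition]

variable (h : frobeniusPow p 1 D * T = S * D) (h' : frobeniusPow p 1 E * S = V * E)

theorem map_of (e : ℕ) (v : ι → R) :
    map D h (of p T e v) = of p S e (frobeniusPow p e D *ᵥ v) := rfl

theorem exists_of_eq (z : FrobeniusLimit p T) : ∃ e v, of p T e v = z :=
  let ⟨e, v, hv⟩ := exists_of fun _ : Unit => z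
  ⟨e, v (), hv ()⟩

theorem map_frobenius (z : FrobeniusLimit p T) :
    map D h (frobenius p T z) = frobenius p S (map D h z) := by
  obtain ⟨e, v, rfl⟩ := exists_of_eq z
  rw [frobenius_of, map_of, map_of, frobenius_of, frobeniusPow_succ_mulVec]

theorem map_map_eq_zero (hED : E * D = 0) (z : FrobeniusLimit p T) :
    map E h' (map D h z) = 0 := by
  obtain ⟨e, v, rfl⟩ := exists_of_eq z
  rw [map_of, map_of, mulVec_mulVec, ← frobeniusPow_mul, hED,
    frobeniusPow, Matrix.map_zero _ (map_zero _), zero_mulVec, map_zero]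

theorem smul_eq_zero {f : R} (hf : ∀ r : R, f * r = 0 → r = 0) (z : FrobeniusLimit p T)
    (hz : f • z = 0) : z = 0 := by
  obtain ⟨e, v, rfl⟩ := exists_of_eq z
  rw [← map_smul, of_eq_zero_iff] at hz
  obtain ⟨k, hk⟩ := hz
  rw [mulVec_smul] at hk
  exact of_eq_zero_iff.2 ⟨k, funext fun i => hf _ (congrFun hk i)⟩

theorem koszulExact {f₁ f₂ : R} (hf : KoszulExact f₁ f₂ R) :
    KoszulExact f₁ f₂ (FrobeniusLimit p T) := by
  intro u v huv
  obtain ⟨e, w, hw⟩ := exists_of ![u, v]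
  obtain rfl : of p T e (w 0) = u := hw 0
  obtain rfl : of p T e (w 1) = v := hw 1
  rw [← map_smul, ← map_smul, ← map_add, of_eq_zero_iff] at huv
  obtain ⟨k, hk⟩ := huv
  rw [mulVec_add, mulVec_smul, mulVec_smul] at hk
  choose t ht using fun i => hf _ _ (congrFun hk i)
  refine ⟨of p T (e + k) t, ?_, ?_⟩
  · rw [← of_transition e k, funext fun i => (ht i).1]
    exact map_smul (of p T (e + k)) f₂ t
  · rw [← of_transition e k, funext fun i => (ht i).2, ← map_smul, ← map_neg]
    rfl

theorem of_mem_iSup_map_of_iff {N : ℕ → Submodule R (ι → R)}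
    (hN : ∀ e k x, x ∈ N e → transition p T e k *ᵥ x ∈ N (e + k)) {e : ℕ} {z : ι → R} :
    of p T e z ∈ ⨆ e, (N e).map (of p T e) ↔ ∃ k, transition p T e k *ᵥ z ∈ N (e + k) := by
  have hmono : Monotone fun e => (N e).map (of p T e) := by
    refine monotone_nat_of_le_succ fun e => ?_
    rintro _ ⟨x, hx, rfl⟩
    exact ⟨_, hN e 1 x hx, of_transition e 1 x⟩
  rw [Submodule.mem_iSup_of_directed _ hmono.directed_le]
  refine ⟨?_, fun ⟨k, hk⟩ => ⟨e + k, _, hk, of_transition e k z⟩⟩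
  rintro ⟨e', x, hx, h⟩
  rw [← of_transition e' e, ← of_transition e e', add_comm e' e, of_eq_of_iff] at h
  obtain ⟨k, hk⟩ := h
  refine ⟨e' + k, ?_⟩
  rw [transition_add, ← mulVec_mulVec, ← hk, ← add_assoc]
  exact hN _ _ _ (add_comm e' e ▸ hN _ _ _ hx)

variable (p T) in
theorem iSup_range_of : ⨆ e, LinearMap.range (of p T e) = ⊤ :=
  eq_top_iff.2 fun z _ =>
    let ⟨e, v, hv⟩ := exists_of_eq z
    Submodule.mem_iSup_of_mem e ⟨v, hv⟩

theorem smul_top_eq_iSup (J : Ideal R) :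
    J • (⊤ : Submodule R (FrobeniusLimit p T)) = ⨆ e, (J • ⊤ : Submodule R _).map (of p T e) := by
  simp only [← iSup_range_of p T, Submodule.smul_iSup, Submodule.map_smul'', Submodule.map_top]

theorem range_map : LinearMap.range (map D h) =
    ⨆ e, (LinearMap.range (frobeniusPow p e D).mulVecLin).map (of p S e) := by
  rw [LinearMap.range_eq_map, ← iSup_range_of p T, Submodule.map_iSup]
  simp only [← LinearMap.range_comp]
  rfl

theorem exactModAt_iff {P : PrimeSpectrum R} {J : Ideal R} :
    ExactModAt P J (map D h) (map E h') ↔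
      ∀ e z, frobeniusPow p e E *ᵥ z ∈ J • (⊤ : Submodule R (l → R)) → ∃ s ∉ P.asIdeal, ∃ k,
        s • transition p S e k *ᵥ z ∈
          LinearMap.range (frobeniusPow p (e + k) D).mulVecLin ⊔ J • (⊤ : Submodule R (κ → R)) := by
  have hN (e k : ℕ) (x : κ → R)
      (hx : x ∈ LinearMap.range (frobeniusPow p e D).mulVecLin ⊔ J • (⊤ : Submodule R (κ → R))) :
      transition p S e k *ᵥ x ∈ LinearMap.range (frobeniusPow p (e + k) D).mulVecLin ⊔ J • ⊤ := by
    obtain ⟨_, ⟨y, rfl⟩, w, hw, rfl⟩ := Submodule.mem_sup.1 hx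
    rw [mulVec_add]
    refine Submodule.add_mem_sup ⟨transition p T e k *ᵥ y, ?_⟩ (mulVec_mem_smul_top _ hw)
    simp only [mulVecLin_apply, mulVec_mulVec, transition_mul_frobeniusPow h]
  have hker (e : ℕ) (z : κ → R) : map E h' (of p S e z) ∈ J • (⊤ : Submodule R _) ↔
      ∃ k, frobeniusPow p (e + k) E *ᵥ (transition p S e k *ᵥ z) ∈ J • (⊤ : Submodule R _) := by
    rw [map_of, smul_top_eq_iSup, of_mem_iSup_map_of_iff fun _ _ _ => mulVec_mem_smul_top _]
    simp only [mulVec_mulVec, transition_mul_frobeniusPow h']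
  have hrange (e : ℕ) (z : κ → R) :
      of p S e z ∈ localClosure P (LinearMap.range (map D h) ⊔ J • ⊤) ↔
        ∃ s ∉ P.asIdeal, ∃ k, s • transition p S e k *ᵥ z ∈
          LinearMap.range (frobeniusPow p (e + k) D).mulVecLin ⊔ J • (⊤ : Submodule R _) := by
    simp only [mem_localClosure, range_map, smul_top_eq_iSup, ← iSup_sup_eq, ← Submodule.map_sup,
      ← map_smul, of_mem_iSup_map_of_iff hN, mulVec_smul]
  refine ⟨fun H e z hz => (hrange e z).1 (H ((hker e z).2 ⟨0, ?_⟩)), fun H x hx => ?_⟩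
  · simpa [transition] using hz
  · obtain ⟨e, z, rfl⟩ := exists_of_eq x
    obtain ⟨k, hk⟩ := (hker e z).1 hx
    rw [← of_transition e k]
    exact (hrange _ _).2 (H _ _ hk)

end FrobeniusLimit

end LimitMap

open Matrix

/-- A bounded below cochain complex of finite free modules, given by matrices, together with a
morphism `T` to its Frobenius pullback. -/
structure FrobeniusComplex (R : Type*) [CommRing R] (p : ℕ) [ExpChar R p] where
  /-- The basis of the `k`-th term. -/
  ι : ℕ → Type
  [fintype : ∀ k, Fintype (ι k)]
  [decidableEq : ∀ k, DecidableEq (ι k)]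
  /-- The differential. -/
  d : ∀ k, Matrix (ι (k + 1)) (ι k) R
  /-- The morphism to the Frobenius pullback. -/
  T : ∀ k, Matrix (ι k) (ι k) R
  d_mul_d : ∀ k, d (k + 1) * d k = 0
  frobeniusPow_d_mul : ∀ k, frobeniusPow p 1 (d k) * T k = T (k + 1) * d k

namespace FrobeniusComplex

attribute [instance] fintype decidableEq

variable {R : Type*} [CommRing R] {p : ℕ} [ExpChar R p] (C : FrobeniusComplex R p)

/-- The set of primes at which the direct limit of the iterated Frobenius pullbacks of the complex,
reduced modulo `J`, is exact in degree `k + 1`. -/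
def exactLocus (J : Ideal R) (k : ℕ) : Set (PrimeSpectrum R) :=
  {P | ∀ e z, (∀ i, (frobeniusPow p e (C.d (k + 1)) *ᵥ z) i ∈ J) →
    ∃ s ∉ P.asIdeal, ∃ l y, ∀ i, s * (transition p (C.T (k + 1)) e l *ᵥ z) i -
      (frobeniusPow p (e + l) (C.d k) *ᵥ y) i ∈ J}

theorem mem_range_sup_smul_top_iff {κ l : Type*} [Fintype κ] [Finite l] {J : Ideal R}
    {A : Matrix l κ R} {x : l → R} :
    x ∈ LinearMap.range A.mulVecLin ⊔ J • (⊤ : Submodule R (l → R)) ↔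
      ∃ y, ∀ i, x i - (A *ᵥ y) i ∈ J := by
  simp only [Submodule.mem_sup, LinearMap.mem_range, exists_exists_eq_and]
  refine ⟨?_, fun ⟨y, hy⟩ => ⟨y, x - A *ᵥ y, mem_smul_top_iff_forall_apply_mem.2 hy, by simp⟩⟩
  rintro ⟨y, w, hw, rfl⟩
  exact ⟨y, by simpa using mem_smul_top_iff_forall_apply_mem.1 hw⟩

theorem mem_exactLocus_iff_exactModAt {J : Ideal R} {k : ℕ} {P : PrimeSpectrum R} :
    P ∈ C.exactLocus J k ↔ ExactModAt P J (FrobeniusLimit.map (C.d k) (C.frobeniusPow_d_mul k))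
      (FrobeniusLimit.map (C.d (k + 1)) (C.frobeniusPow_d_mul (k + 1))) := by
  simp only [FrobeniusLimit.exactModAt_iff, mem_smul_top_iff_forall_apply_mem,
    mem_range_sup_smul_top_iff]
  rfl

theorem isOpen_exactLocus_of_torsion [IsNoetherianRing R]
    (hflat : ReflectsRelations (LinearMap.frobenius R R p)) {f₁ f₂ : R}
    (hf₁ : ∀ r : R, f₁ * r = 0 → r = 0) (hf : KoszulExact f₁ f₂ R) (k : ℕ)
    (htor : ∀ e z, frobeniusPow p e (C.d (k + 2)) *ᵥ z = 0 →
      ∃ m : ℕ, ∃ t, f₂ ^ m • z = frobeniusPow p e (C.d (k + 1)) *ᵥ t) :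
    IsOpen (C.exactLocus (Ideal.span {f₁, f₂}) k) := by
  have h (k : ℕ) := C.frobeniusPow_d_mul k
  have hF (k : ℕ) := FrobeniusLimit.isFFinite_frobenius (T := C.T k) hflat
  rw [show C.exactLocus _ k = _ from Set.ext fun P => C.mem_exactLocus_iff_exactModAt]
  refine isOpen_setOf_exactModAt hflat (hF _) (hF _) (hF (k + 3))
    (FrobeniusLimit.map_frobenius _) (FrobeniusLimit.map_frobenius _)
    (FrobeniusLimit.map_frobenius (h (k + 2))) (FrobeniusLimit.map_map_eq_zero _ _ (C.d_mul_d _))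
    (FrobeniusLimit.map_map_eq_zero _ _ (C.d_mul_d _)) (FrobeniusLimit.koszulExact hf)
    (FrobeniusLimit.koszulExact hf) (FrobeniusLimit.smul_eq_zero hf₁) fun z hz => ?_
  obtain ⟨e, z, rfl⟩ := FrobeniusLimit.exists_of_eq z
  rw [FrobeniusLimit.map_of, FrobeniusLimit.of_eq_zero_iff] at hz
  obtain ⟨l, hl⟩ := hz
  rw [mulVec_mulVec, transition_mul_frobeniusPow (h _), ← mulVec_mulVec] at hl
  obtain ⟨m, t, ht⟩ := htor _ _ hl
  refine ⟨m, FrobeniusLimit.of p _ (e + l) t, ?_⟩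
  rw [FrobeniusLimit.map_of, ← ht, map_smul, FrobeniusLimit.of_transition]

section Cone

variable (f : R)

/-- The differential of the mapping cone of multiplication by `f`. -/
def coneD (k : ℕ) : Matrix (C.ι (k + 2) ⊕ C.ι (k + 1)) (C.ι (k + 1) ⊕ C.ι k) R :=
  fromBlocks (C.d (k + 1)) 0 (f • 1) (-C.d k)

/-- The morphism from the cone of multiplication by `f` to its Frobenius pullback. The pullback is
the cone of multiplication by `f ^ p`, whence the factor `f ^ (p - 1)`. -/
def coneT (k : ℕ) : Matrix (C.ι (k + 1) ⊕ C.ι k) (C.ι (k + 1) ⊕ C.ι k) R :=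
  fromBlocks (C.T (k + 1)) 0 0 (f ^ (p - 1) • C.T k)

theorem frobeniusPow_coneD (e k : ℕ) : frobeniusPow p e (C.coneD f k) =
    fromBlocks (frobeniusPow p e (C.d (k + 1))) 0 (f ^ p ^ e • 1) (-frobeniusPow p e (C.d k)) := by
  rw [frobeniusPow, coneD, fromBlocks_map, Matrix.map_zero _ (map_zero _),
    Matrix.map_neg _ (map_neg _), Matrix.map_smul' _ _ _ (map_mul _),
    Matrix.map_one _ (map_zero _) (map_one _), iterateFrobenius_def]

theorem frobeniusPow_coneT (e k : ℕ) : frobeniusPow p e (C.coneT f k) =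
    fromBlocks (frobeniusPow p e (C.T (k + 1))) 0 0
      ((f ^ (p - 1)) ^ p ^ e • frobeniusPow p e (C.T k)) := by
  rw [frobeniusPow, coneT, fromBlocks_map, Matrix.map_zero _ (map_zero _),
    Matrix.map_zero _ (map_zero _), Matrix.map_smul' _ _ _ (map_mul _), iterateFrobenius_def]

/-- The mapping cone of multiplication by `f`, shifted by one: its `k`-th term is the sum of the
`(k + 1)`-st and the `k`-th term of the complex. -/
def cone : FrobeniusComplex R p where
  ι k := C.ι (k + 1) ⊕ C.ι k
  d := C.coneD f
  T := C.coneT f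
  d_mul_d k := by simp [coneD, fromBlocks_multiply, d_mul_d]
  frobeniusPow_d_mul k := by
    have hp : f ^ p = f ^ (p - 1) * f := by
      rw [← pow_succ, Nat.sub_add_cancel (expChar_pos R p)]
    rw [frobeniusPow_coneD]
    simp [coneD, coneT, fromBlocks_multiply, frobeniusPow_d_mul, smul_smul, hp, mul_comm]

variable {f}

theorem exists_smul_eq_coneD_mulVec (e k : ℕ) {z : C.ι (k + 2) ⊕ C.ι (k + 1) → R}
    (hz : frobeniusPow p e (C.coneD f (k + 1)) *ᵥ z = 0) :
    ∃ t, f ^ p ^ e • z = frobeniusPow p e (C.coneD f k) *ᵥ t := by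
  refine ⟨Sum.elim (z ∘ Sum.inr) 0, ?_⟩
  rw [frobeniusPow_coneD, fromBlocks_mulVec] at hz
  rw [frobeniusPow_coneD, fromBlocks_mulVec]
  ext (i | i)
  · have := congrFun hz (Sum.inr i)
    simpa [smul_mulVec, neg_mulVec, ← sub_eq_add_neg, sub_eq_zero] using this
  · simp [smul_mulVec]

theorem exists_transition_coneT (e k l : ℕ) : ∃ x : R, transition p (C.coneT f k) e l =
    fromBlocks (transition p (C.T (k + 1)) e l) 0 0 (x • transition p (C.T k) e l) := by
  induction l with
  | zero => exact ⟨1, by simp [transition]⟩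
  | succ l ih =>
    obtain ⟨x, hx⟩ := ih
    refine ⟨(f ^ (p - 1)) ^ p ^ (e + l) * x, ?_⟩
    simp [transition, hx, frobeniusPow_coneT, fromBlocks_multiply, smul_smul, mul_comm]

theorem exists_dvd_transition_coneT (hp : 1 < p) (e k l : ℕ) : ∃ x : R, f ∣ x ∧
    transition p (C.coneT f k) e (l + 1) =
      fromBlocks (transition p (C.T (k + 1)) e (l + 1)) 0 0
        (x • transition p (C.T k) e (l + 1)) := by
  obtain ⟨x, hx⟩ := C.exists_transition_coneT (f := f) e k l
  refine ⟨(f ^ (p - 1)) ^ p ^ (e + l) * x, Dvd.dvd.mul_right ?_ x, ?_⟩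
  · exact (dvd_pow_self f (Nat.sub_ne_zero_of_lt hp)).trans (dvd_pow_self _ (by positivity))
  · simp [transition, hx, frobeniusPow_coneT, fromBlocks_multiply, smul_smul, mul_comm]

theorem mem_exactLocus_cone_iff {J : Ideal R} {k : ℕ} {P : PrimeSpectrum R} :
    P ∈ (C.cone f).exactLocus J k ↔ ∀ e (z : C.ι (k + 2) ⊕ C.ι (k + 1) → R),
      (∀ i, (frobeniusPow p e (C.coneD f (k + 1)) *ᵥ z) i ∈ J) →
      ∃ s ∉ P.asIdeal, ∃ l y, ∀ i, s * (transition p (C.coneT f (k + 1)) e l *ᵥ z) i -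
        (frobeniusPow p (e + l) (C.coneD f k) *ᵥ y) i ∈ J := Iff.rfl

theorem exactLocus_cone_subset {J : Ideal R} (hf : f ∈ J) (k : ℕ) :
    (C.cone f).exactLocus J k ⊆ C.exactLocus J (k + 1) := by
  intro P hP e z hz
  obtain ⟨s, hs, l, y, h⟩ := C.mem_exactLocus_cone_iff.1 hP e (Sum.elim z 0) <| by
    have hfe : f ^ p ^ e ∈ J :=
      J.pow_mem_of_mem hf _ (Nat.pos_of_ne_zero (pow_ne_zero _ (expChar_ne_zero R p)))
    rw [frobeniusPow_coneD, fromBlocks_mulVec]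
    rintro (i | i)
    · simpa using hz i
    · simpa [smul_mulVec] using J.mul_mem_right _ hfe
  obtain ⟨x, hx⟩ := C.exists_transition_coneT (f := f) e (k + 1) l
  refine ⟨s, hs, l, y ∘ Sum.inl, fun i => ?_⟩
  simpa [hx, frobeniusPow_coneD, fromBlocks_mulVec] using h (Sum.inl i)

theorem exactLocus_subset_cone (hp : 1 < p) {J : Ideal R} (hf : f ∈ J) (k : ℕ) :
    C.exactLocus J (k + 1) ⊆ (C.cone f).exactLocus J k := by
  refine fun P hP => C.mem_exactLocus_cone_iff.2 fun e z hz => ?_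
  rw [frobeniusPow_coneD, fromBlocks_mulVec] at hz
  obtain ⟨s, hs, l, y, h⟩ := hP e (z ∘ Sum.inl) fun i => by simpa using hz (Sum.inl i)
  obtain ⟨x, hfx, hx⟩ := C.exists_dvd_transition_coneT hp (f := f) e (k + 1) l
  -- The second component of the transition map of the cone vanishes modulo `f` after one step.
  refine ⟨s, hs, l + 1, Sum.elim (frobeniusPow p (e + l) (C.T (k + 1)) *ᵥ y) 0, ?_⟩
  rw [hx, frobeniusPow_coneD, fromBlocks_mulVec, fromBlocks_mulVec]
  rintro (i | i)
  · have hmem : s • transition p (C.T (k + 2)) e l *ᵥ (z ∘ Sum.inl) -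
        frobeniusPow p (e + l) (C.d (k + 1)) *ᵥ y ∈ J • (⊤ : Submodule R _) :=
      mem_smul_top_iff_forall_apply_mem.2 h
    have hw := mem_smul_top_iff_forall_apply_mem.1
      (mulVec_mem_smul_top (frobeniusPow p (e + l) (C.T (k + 2))) hmem) i
    rw [mulVec_sub, mulVec_smul, mulVec_mulVec, mulVec_mulVec,
      frobeniusPow_mul_frobeniusPow (C.frobeniusPow_d_mul _), ← mulVec_mulVec] at hw
    simpa [transition, add_assoc] using hw
  · obtain ⟨x, rfl⟩ := hfx
    have hfe : f ^ p ^ (e + (l + 1)) ∈ J := J.pow_mem_of_mem hf _ (by positivity)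
    simpa [smul_mulVec, mul_assoc] using
      J.sub_mem (J.mul_mem_left s (J.mul_mem_right _ hf)) (J.mul_mem_right _ hfe)

end Cone

theorem isOpen_exactLocus [IsNoetherianRing R] (hp : 1 < p)
    (hflat : ReflectsRelations (LinearMap.frobenius R R p)) {f₁ f₂ : R}
    (hf₁ : ∀ r : R, f₁ * r = 0 → r = 0) (hf : KoszulExact f₁ f₂ R) (k : ℕ) :
    IsOpen (C.exactLocus (Ideal.span {f₁, f₂}) (k + 1)) := by
  have hf₂ : f₂ ∈ Ideal.span {f₁, f₂} := Ideal.subset_span (by simp)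
  rw [(C.exactLocus_subset_cone hp hf₂ k).antisymm (C.exactLocus_cone_subset hf₂ k)]
  exact (C.cone f₂).isOpen_exactLocus_of_torsion hflat hf₁ hf k fun e _ hz =>
    ⟨p ^ e, C.exists_smul_eq_coneD_mulVec e (k + 1) hz⟩

/-- The complex shifted by one, with a zero term added in degree `0`. -/
def pad : FrobeniusComplex R p where
  ι
    | 0 => Empty
    | k + 1 => C.ι k
  fintype
    | 0 => inferInstanceAs (Fintype Empty)
    | k + 1 => C.fintype k
  decidableEq
    | 0 => inferInstanceAs (DecidableEq Empty)
    | k + 1 => C.decidableEq k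
  d
    | 0 => 0
    | k + 1 => C.d k
  T
    | 0 => 0
    | k + 1 => C.T k
  d_mul_d
    | 0 => Matrix.mul_zero _
    | k + 1 => C.d_mul_d k
  frobeniusPow_d_mul
    | 0 => by ext _ j; exact j.elim
    | k + 1 => C.frobeniusPow_d_mul k

end FrobeniusComplex

section FlatLift

variable {A : Type*} [CommRing A] {p : ℕ} [ExpChar A p] {ι : Type} [Fintype ι]

/-- The module of linear relations modulo `J` among the members of a finite family. -/
def relationsMod (J : Ideal A) (a : ι → A) : Submodule A (ι → A) :=
  Submodule.comap (Fintype.linearCombination A a) J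

theorem mem_relationsMod {J : Ideal A} {a v : ι → A} :
    v ∈ relationsMod J a ↔ Fintype.linearCombination A a v ∈ J := Iff.rfl

theorem map_bracket_relationsMod_le (J : Ideal A) (a : ι → A) :
    (bracket p 1 (relationsMod J a)).map
      (Fintype.linearCombination A (LinearMap.frobenius A A p ∘ a)) ≤ idealBracket p 1 J :=
  (map_linearCombination_bracket (LinearMap.frobenius A A p) 1 a _).trans_le
    (frobeniusSpan_mono 1 (Submodule.map_comap_le _ _))

theorem bracket_relations_le (a : ι → A) :
    bracket p 1 (relations A a) ≤ relations A (LinearMap.frobenius A A p ∘ a) := by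
  have h := map_bracket_relationsMod_le (p := p) ⊥ a
  rw [idealBracket, ← Submodule.span_empty, frobeniusSpan_span, Set.image_empty,
    Submodule.span_empty, Submodule.map_le_iff_le_comap] at h
  exact h

theorem relationsMod_frobenius_le (J : Ideal A) [ExpChar (A ⧸ J) p]
    (hJ : ReflectsRelations (LinearMap.frobenius (A ⧸ J) (A ⧸ J) p)) (a : ι → A) :
    relationsMod J (LinearMap.frobenius A A p ∘ a) ≤
      bracket p 1 (relationsMod J a) ⊔ J • ⊤ := by
  intro v hv
  have hmem (r b : ι → A) : Fintype.linearCombination A b r ∈ J ↔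
      (fun i => Ideal.Quotient.mk J (r i)) ∈
        relations (A ⧸ J) fun i => Ideal.Quotient.mk J (b i) := by
    simp [mem_relations, ← Ideal.Quotient.eq_zero_iff_mem, Fintype.linearCombination_apply]
  obtain ⟨n, c, r, hr, hsum⟩ := mem_frobeniusSpan_iff.1 <|
    hJ (fun i => Ideal.Quotient.mk J (a i)) <| by
      simpa [Function.comp_def, LinearMap.frobenius_def] using (hmem v _).1 hv
  choose c' hc using fun k => Ideal.Quotient.mk_surjective (c k)
  choose r' hr' using fun k i => Ideal.Quotient.mk_surjective (r k i)
  obtain rfl : (fun k => Ideal.Quotient.mk J (c' k)) = c := funext hc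
  obtain rfl : (fun k i => Ideal.Quotient.mk J (r' k i)) = r := funext₂ hr'
  rw [← add_sub_cancel (∑ k, c' k • iter (entrywiseFrobenius A ι p) 1 (r' k)) v]
  refine Submodule.add_mem_sup (sum_mem fun k _ => Submodule.smul_mem _ _
    (iter_mem_frobeniusSpan 1 ((hmem _ _).2 (hr k))))
    (mem_smul_top_iff_forall_apply_mem.2 fun i => ?_)
  rw [← Ideal.Quotient.eq_zero_iff_mem, Pi.sub_apply, map_sub, sub_eq_zero, ← congrFun hsum i]
  simp [iter_entrywiseFrobenius]

theorem pow_smul_mem_bracket_relationsMod (x : A) (a w : ι → A) :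
    x ^ p • w ∈ bracket p 1 (relationsMod (Ideal.span {x}) a) := by
  have hw : w ∈ bracket p 1 (⊤ : Submodule A (ι → A)) := by rw [bracket_top]; trivial
  obtain ⟨n, c, y, -, rfl⟩ := mem_frobeniusSpan_iff.1 hw
  rw [Finset.smul_sum]
  refine sum_mem fun k _ => ?_
  rw [smul_comm, show x ^ p = x ^ p ^ 1 by rw [pow_one], ← iter_smul]
  refine Submodule.smul_mem _ _ (iter_mem_frobeniusSpan 1 ?_)
  rw [mem_relationsMod, map_smul]
  exact Ideal.mul_mem_right _ _ (Ideal.mem_span_singleton_self x)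

variable {x : A}

theorem exists_eq_add_pow_smul (hx : IsSMulRegular A x) [ExpChar (A ⧸ Ideal.span {x}) p]
    (hq : ReflectsRelations (LinearMap.frobenius (A ⧸ Ideal.span {x}) (A ⧸ Ideal.span {x}) p))
    (a : ι → A) {t : ℕ} (ht : t ≤ p) {v : ι → A}
    (hv : x ^ t ∣ Fintype.linearCombination A (LinearMap.frobenius A A p ∘ a) v) :
    ∃ u ∈ bracket p 1 (relationsMod (Ideal.span {x}) a), ∃ w,
      v = u + x ^ t • w := by
  induction t with
  | zero => exact ⟨0, zero_mem _, v, by simp⟩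
  | succ t ih =>
    obtain ⟨u, hu, w, rfl⟩ := ih (t.le_succ.trans ht) ((pow_dvd_pow x t.le_succ).trans hv)
    have hu' : x ^ p ∣ Fintype.linearCombination A (LinearMap.frobenius A A p ∘ a) u := by
      have h := map_bracket_relationsMod_le _ a (Submodule.mem_map_of_mem hu)
      rwa [idealBracket, Ideal.span, frobeniusSpan_span, Set.image_singleton, iter_frobenius,
        pow_one, ← Ideal.span, Ideal.mem_span_singleton] at h
    rw [map_add, map_smul, dvd_add_right ((pow_dvd_pow x ht).trans hu')] at hv
    obtain ⟨y, hy⟩ := hv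
    have hw : Fintype.linearCombination A (LinearMap.frobenius A A p ∘ a) w = x * y :=
      hx.pow t (by simpa [pow_succ, mul_assoc] using hy)
    obtain ⟨u', hu', z, hz, rfl⟩ := Submodule.mem_sup.1 <|
      relationsMod_frobenius_le _ hq a
        (mem_relationsMod.2 (hw ▸ Ideal.mem_span_singleton.2 (dvd_mul_right x y)))
    rw [Submodule.ideal_span_singleton_smul] at hz
    obtain ⟨z, -, rfl⟩ := hz
    refine ⟨u + x ^ t • u', add_mem hu (Submodule.smul_mem _ _ hu'), z, ?_⟩
    rw [DistribSMul.toLinearMap_apply, smul_add, smul_smul, pow_succ, add_assoc]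

theorem mem_relations_option {a : Option ι → A} {r : Option ι → A} :
    r ∈ relations A a ↔
      r none * a none + Fintype.linearCombination A (a ∘ some) (r ∘ some) = 0 := by
  rw [mem_relations, Fintype.sum_option]
  rfl

theorem map_funLeft_some_relations (x : A) (a : ι → A) :
    (relations A fun i : Option ι => i.elim x a).map (LinearMap.funLeft A A some) =
      relationsMod (Ideal.span {x}) a := by
  ext v
  simp only [Submodule.mem_map, mem_relations_option, mem_relationsMod, Ideal.mem_span_singleton]
  constructor
  · rintro ⟨r, hr, rfl⟩
    replace hr : r none * x + Fintype.linearCombination A a (r ∘ some) = 0 := hr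
    refine ⟨-r none, ?_⟩
    change Fintype.linearCombination A a (r ∘ some) = x * -r none
    linear_combination hr
  · rintro ⟨s, hs⟩
    refine ⟨fun i => i.elim (-s) v, ?_, rfl⟩
    change -s * x + Fintype.linearCombination A a v = 0
    linear_combination hs

theorem relations_frobenius_option_le (hx : IsSMulRegular A x) [ExpChar (A ⧸ Ideal.span {x}) p]
    (hq : ReflectsRelations (LinearMap.frobenius (A ⧸ Ideal.span {x}) (A ⧸ Ideal.span {x}) p))
    (a : ι → A) :
    relations A (LinearMap.frobenius A A p ∘ fun i : Option ι => i.elim x a) ≤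
      bracket p 1 (relations A fun i : Option ι => i.elim x a) := by
  intro v hv
  have hrel (r : Option ι → A)
      (hr : r ∈ relations A (LinearMap.frobenius A A p ∘ fun i : Option ι => i.elim x a)) :
      r none * x ^ p +
        Fintype.linearCombination A (LinearMap.frobenius A A p ∘ a) (r ∘ some) = 0 :=
    mem_relations_option.1 hr
  obtain ⟨u, hu, w, huw⟩ := exists_eq_add_pow_smul hx hq a le_rfl (v := v ∘ some)
    ⟨-v none, by linear_combination hrel v hv⟩
  have hvW := huw ▸ add_mem hu (pow_smul_mem_bracket_relationsMod x a w)
  rw [← map_funLeft_some_relations, ← map_funLeft_bracket] at hvW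
  obtain ⟨v', hv', hvv'⟩ := hvW
  replace hvv' : v' ∘ some = v ∘ some := hvv'
  suffices v' = v from this ▸ hv'
  ext (_ | i)
  · refine hx.pow p ?_
    have h := hrel v' (bracket_relations_le _ hv')
    rw [hvv'] at h
    simp only [smul_eq_mul]
    linear_combination h - hrel v hv
  · exact congrFun hvv' i

end FlatLift

section FlatDescent

variable {A : Type*} [CommRing A] {p : ℕ} [ExpChar A p] {ι κ : Type} [Fintype ι] [Fintype κ] {x : A}

theorem relationsMod_le_relations_sup (a : ι → A)
    (ha : ∀ y, x * y ∈ Ideal.span (Set.range a) → y ∈ Ideal.span (Set.range a)) :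
    relationsMod (Ideal.span {x}) a ≤ relations A a ⊔ Ideal.span {x} • ⊤ := by
  intro r hr
  obtain ⟨y, hy⟩ := Ideal.mem_span_singleton.1 (mem_relationsMod.1 hr)
  obtain ⟨s, hs⟩ := (Submodule.mem_span_range_iff_exists_fun A).1 <| ha y <|
    (Submodule.mem_span_range_iff_exists_fun A).2 ⟨r, hy⟩
  rw [← sub_add_cancel r (x • s)]
  refine Submodule.add_mem_sup ?_
    (Submodule.smul_mem_smul (Ideal.mem_span_singleton_self x) Submodule.mem_top)
  rw [relations, LinearMap.mem_ker, map_sub, map_smul, hy, Fintype.linearCombination_apply, hs,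
    smul_eq_mul, sub_self]

theorem relations_frobenius_le_sup_smul (hx : IsSMulRegular A x) [ExpChar (A ⧸ Ideal.span {x}) p]
    (hq : ReflectsRelations (LinearMap.frobenius (A ⧸ Ideal.span {x}) (A ⧸ Ideal.span {x}) p))
    (a : ι → A) (ha : ∀ y, x * y ∈ Ideal.span (Set.range a) → y ∈ Ideal.span (Set.range a)) :
    relations A (LinearMap.frobenius A A p ∘ a) ≤ bracket p 1 (relations A a) ⊔
      Ideal.span {x} • relations A (LinearMap.frobenius A A p ∘ a) := by
  intro w hw
  have hle : bracket p 1 (relationsMod (Ideal.span {x}) a) ≤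
      bracket p 1 (relations A a) ⊔ Ideal.span {x} • ⊤ := by
    refine (frobeniusSpan_mono 1 (relationsMod_le_relations_sup a ha)).trans ?_
    rw [frobeniusSpan_sup]
    refine sup_le_sup_left (frobeniusSpan_le.2 fun v hv => ?_) _
    rw [Submodule.mem_comap, mem_smul_top_iff_forall_apply_mem, iter_entrywiseFrobenius]
    exact fun i => Ideal.pow_mem_of_mem _ (mem_smul_top_iff_forall_apply_mem.1 hv i) _
      (pow_pos (expChar_pos A p) 1)
  obtain ⟨u, hu, z, hz, rfl⟩ := Submodule.mem_sup.1 <|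
    sup_le hle le_sup_right <| relationsMod_frobenius_le _ hq a <|
      mem_relationsMod.2 <| (show _ = (0 : A) from hw) ▸ zero_mem _
  refine Submodule.add_mem_sup hu ?_
  rw [Submodule.ideal_span_singleton_smul] at hz ⊢
  obtain ⟨z, -, rfl⟩ := hz
  have hxz := (Submodule.add_mem_iff_right _ (bracket_relations_le a hu)).1 hw
  refine ⟨z, hx ?_, rfl⟩
  simpa [relations] using hxz

theorem linearCombination_comp_some_mem_bracket {a : ι → A} {ρ : κ → Option ι → A}
    (hρ : ∀ k, ρ k ∈ relations A fun i : Option ι => i.elim x a) {b : κ → A}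
    (hb : b ∈ bracket p 1 (relations A fun k => ρ k none)) :
    LinearMap.funLeft A A some
      (Fintype.linearCombination A (iter (entrywiseFrobenius A _ p) 1 ∘ ρ) b) ∈
        bracket p 1 (relations A a) := by
  have h := Submodule.mem_map_of_mem (f := LinearMap.funLeft A A some)
    (Submodule.mem_map_of_mem
      (f := Fintype.linearCombination A (iter (entrywiseFrobenius A _ p) 1 ∘ ρ)) hb)
  rw [map_linearCombination_bracket, map_funLeft_bracket] at h
  refine frobeniusSpan_mono 1 ?_ h
  rintro _ ⟨_, ⟨r, hr, rfl⟩, rfl⟩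
  have hmem : Fintype.linearCombination A ρ r ∈ relations A fun i : Option ι => i.elim x a :=
    sum_mem fun k _ => Submodule.smul_mem _ _ (hρ k)
  have hnone : Fintype.linearCombination A ρ r none = 0 := by
    simpa [Fintype.linearCombination_apply] using mem_relations.1 hr
  rw [mem_relations_option, hnone, zero_mul, zero_add] at hmem
  exact hmem

theorem relations_frobenius_le_of_colon [IsNoetherianRing A] (hx : IsSMulRegular A x)
    [ExpChar (A ⧸ Ideal.span {x}) p]
    (hq : ReflectsRelations (LinearMap.frobenius (A ⧸ Ideal.span {x}) (A ⧸ Ideal.span {x}) p))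
    (a : ι → A)
    (ih : ∀ {n : ℕ} (b : Fin n → A),
      (∀ y, x * y ∈ Ideal.span (Set.range a) → y ∈ Ideal.span (Set.range b)) →
      relations A (LinearMap.frobenius A A p ∘ b) ≤ bracket p 1 (relations A b)) :
    relations A (LinearMap.frobenius A A p ∘ a) ≤ bracket p 1 (relations A a) := by
  intro w hw
  obtain ⟨n, ρ, hρ⟩ := Submodule.fg_iff_exists_fin_generating_family.1
    (IsNoetherian.noetherian (relations A fun i : Option ι => i.elim x a))
  have hmem (k : Fin n) : ρ k ∈ relations A fun i : Option ι => i.elim x a :=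
    hρ ▸ Submodule.subset_span ⟨k, rfl⟩
  have hw' := relations_frobenius_option_le hx hq a (x := x)
    (show (fun i : Option ι => i.elim 0 w) ∈ _ from mem_relations_option.2 <| by
      change 0 * _ + Fintype.linearCombination A (LinearMap.frobenius A A p ∘ a) w = 0
      rw [zero_mul, zero_add]
      exact hw)
  rw [← hρ] at hw'
  obtain ⟨b, hb⟩ := mem_frobeniusSpan_span_range_iff.1 hw'
  have hb' := linearCombination_comp_some_mem_bracket (p := p) (b := b) hmem
    (ih (fun k => ρ k none) ?_ ?_)
  · rw [Fintype.linearCombination_apply] at hb'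
    exact Eq.subst (motive := fun v => LinearMap.funLeft A A some v ∈ _) hb hb'
  · intro y hy
    obtain ⟨s, hs⟩ := (Submodule.mem_span_range_iff_exists_fun A).1 hy
    have hys : (fun i : Option ι => i.elim y (-s)) ∈
        relations A fun i : Option ι => i.elim x a := by
      simp only [smul_eq_mul] at hs
      simp [mem_relations, Fintype.sum_option, hs, mul_comm y]
    rw [← hρ] at hys
    obtain ⟨c, hc⟩ := (Submodule.mem_span_range_iff_exists_fun A).1 hys
    exact (Submodule.mem_span_range_iff_exists_fun A).2
      ⟨c, by simpa using congrFun hc none⟩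
  · simpa [mem_relations, iter_entrywiseFrobenius, LinearMap.frobenius_def] using
      congrFun hb none

theorem reflectsRelations_frobenius_of_quotient [IsNoetherianRing A]
    (hjac : x ∈ Ideal.jacobson (⊥ : Ideal A)) (hx : IsSMulRegular A x)
    [ExpChar (A ⧸ Ideal.span {x}) p]
    (hq : ReflectsRelations (LinearMap.frobenius (A ⧸ Ideal.span {x}) (A ⧸ Ideal.span {x}) p)) :
    ReflectsRelations (LinearMap.frobenius A A p) := by
  suffices H : ∀ I : Ideal A, ∀ ⦃ι : Type⦄ [Fintype ι] (a : ι → A), Ideal.span (Set.range a) = I →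
      relations A (LinearMap.frobenius A A p ∘ a) ≤ bracket p 1 (relations A a) from
    fun ι _ a => H _ a rfl
  intro I
  induction I using IsNoetherian.induction with
  | hgt I ih =>
    rintro ι _ a rfl
    by_cases ha : ∀ y, x * y ∈ Ideal.span (Set.range a) → y ∈ Ideal.span (Set.range a)
    · refine Submodule.le_of_le_smul_of_le_jacobson_bot (IsNoetherian.noetherian _) ?_
        (relations_frobenius_le_sup_smul hx hq a ha)
      rwa [Ideal.span_le, Set.singleton_subset_iff]
    · push Not at ha
      obtain ⟨y, hxy, hy⟩ := ha
      exact relations_frobenius_le_of_colon hx hq a fun b hb => ih _ (lt_of_le_of_ne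
        (fun z hz => hb z (Ideal.mul_mem_left _ x hz)) fun h => hy (h ▸ hb y hxy)) b rfl

theorem reflectsRelations_frobenius_field (k : Type*) [Field k] [ExpChar k p] :
    ReflectsRelations (LinearMap.frobenius k k p) := by
  intro ι _ a w hw
  by_cases ha : a = 0
  · have htop : relations k a = ⊤ := by
      ext; simp [mem_relations, ha]
    rw [htop, bracket_top]
    trivial
  obtain ⟨i, hi⟩ := Function.ne_iff.1 ha
  classical
  let F := entrywiseFrobenius k ι p
  let u : ι → k := Pi.single i (a i)⁻¹
  have hu : Fintype.linearCombination k a u = 1 := by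
    rw [Fintype.linearCombination_apply_single, smul_eq_mul, inv_mul_cancel₀ hi]
  have hsum : ∑ j, w j • F (Pi.single j 1 - a j • u) = w := by
    have hw0 : ∑ j, w j * a j ^ p = 0 := hw
    have hsingle : ∑ j, w j • F (Pi.single j 1) = w := by
      simp only [F, ← iter_one (entrywiseFrobenius k ι p), entrywiseFrobenius_single]
      exact (pi_eq_sum_univ' w).symm
    simp only [map_sub, smul_sub, map_smulₛₗ, Finset.sum_sub_distrib, hsingle, frobenius_def,
      smul_smul, ← Finset.sum_smul, hw0, zero_smul, sub_zero]
  rw [← hsum]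
  refine sum_mem fun j _ => Submodule.smul_mem _ _ (iter_mem_frobeniusSpan 1 ?_)
  rw [relations, LinearMap.mem_ker, map_sub, map_smul, hu, smul_eq_mul, mul_one,
    Fintype.linearCombination_apply_single, one_smul, sub_self]

end FlatDescent

section RegularLocalRing

universe u

variable {A : Type u} [CommRing A]

theorem exists_span_insert_generators_eq [IsLocalRing A] [IsNoetherianRing A] {x : A}
    (hx : x ∈ maximalIdeal A) (hx2 : x ∉ maximalIdeal A ^ 2) :
    ∃ g ∈ (maximalIdeal A).generators,
      Ideal.span (insert x ((maximalIdeal A).generators \ {g})) = maximalIdeal A := by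
  have hfin := Submodule.FG.finite_generators (maximalIdeal A).fg_of_isNoetherianRing
  have hspan : Ideal.span _ = maximalIdeal A := Submodule.span_generators (maximalIdeal A)
  have hgen {g : A} (hg : g ∈ (maximalIdeal A).generators) : g ∈ maximalIdeal A :=
    hspan.le (Submodule.subset_span hg)
  obtain ⟨c, -, hc⟩ := Submodule.mem_span_finset.1 <|
    show x ∈ Ideal.span (hfin.toFinset : Set A) by rwa [hfin.coe_toFinset, hspan]
  obtain ⟨g, hg, hu⟩ : ∃ g ∈ (maximalIdeal A).generators, IsUnit (c g) := by
    by_contra! hcon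
    refine hx2 (hc ▸ sq (maximalIdeal A) ▸ Ideal.sum_mem _ fun g hg => ?_)
    rw [Set.Finite.mem_toFinset] at hg
    exact Ideal.mul_mem_mul (hcon g hg) (hgen hg)
  refine ⟨g, hg, le_antisymm (Ideal.span_le.2 (Set.insert_subset hx fun _ h => hgen h.1)) ?_⟩
  refine hspan.ge.trans (Ideal.span_le.2 fun g' hg' => ?_)
  obtain rfl | hne := ne_or_eq g' g |>.symm
  swap
  · exact Submodule.subset_span (Set.mem_insert_of_mem x ⟨hg', hne⟩)
  refine (Ideal.unit_mul_mem_iff_mem _ hu).1 ?_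
  classical
  rw [← Finset.add_sum_erase _ _ (hfin.mem_toFinset.2 hg)] at hc
  rw [← smul_eq_mul, eq_sub_of_add_eq hc]
  refine sub_mem (Submodule.subset_span (Set.mem_insert x _)) (sum_mem fun h hh => ?_)
  refine Submodule.smul_mem _ _ (Submodule.subset_span (Set.mem_insert_of_mem x ?_))
  simpa [and_comm] using hh

theorem spanFinrank_map_mk_lt [IsLocalRing A] [IsNoetherianRing A] {x : A}
    (hx : x ∈ maximalIdeal A) (hx2 : x ∉ maximalIdeal A ^ 2) :
    ((maximalIdeal A).map (Ideal.Quotient.mk (Ideal.span {x}))).spanFinrank <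
      (maximalIdeal A).spanFinrank := by
  obtain ⟨g, hg, hgx⟩ := exists_span_insert_generators_eq hx hx2
  have hfg := (maximalIdeal A).fg_of_isNoetherianRing
  have hfin := Submodule.FG.finite_generators hfg
  set S := (maximalIdeal A).generators \ {g}
  have hSfin : S.Finite := hfin.subset Set.sdiff_subset
  have hspan : (maximalIdeal A).map (Ideal.Quotient.mk (Ideal.span {x})) =
      Ideal.span (Ideal.Quotient.mk (Ideal.span {x}) '' S) := by
    rw [← hgx, Ideal.map_span, Set.image_insert_eq,
      Ideal.Quotient.eq_zero_iff_mem.2 (Ideal.mem_span_singleton_self x), Ideal.span_insert_zero]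
  rw [hspan, ← Submodule.FG.generators_ncard hfg]
  calc _ ≤ (Ideal.Quotient.mk (Ideal.span {x}) '' S).ncard :=
        Submodule.spanFinrank_span_le_ncard_of_finite (hSfin.image _)
    _ ≤ S.ncard := Set.ncard_image_le hSfin
    _ < _ := Set.ncard_sdiff_singleton_lt_of_mem hg hfin

theorem isRegularLocalRing_quotient_span_singleton [IsRegularLocalRing A] {x : A}
    (hx : x ∈ maximalIdeal A) (hx2 : x ∉ maximalIdeal A ^ 2) :
    ∃ _ : IsRegularLocalRing (A ⧸ Ideal.span {x}),
      (maximalIdeal (A ⧸ Ideal.span {x})).spanFinrank < (maximalIdeal A).spanFinrank := by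
  have : Nontrivial (A ⧸ Ideal.span {x}) := Ideal.Quotient.nontrivial_iff.2 <|
    mt Ideal.span_singleton_eq_top.1 ((mem_maximalIdeal x).1 hx)
  have : IsLocalRing (A ⧸ Ideal.span {x}) :=
    of_surjective' (Ideal.Quotient.mk _) Ideal.Quotient.mk_surjective
  have hlt := spanFinrank_map_mk_lt hx hx2
  rw [map_maximalIdeal_of_surjective _ Ideal.Quotient.mk_surjective] at hlt
  refine ⟨.of_spanFinrank_maximalIdeal_le _ ?_, hlt⟩
  have hdim := Ideal.height_le_ringKrullDim_quotient_add_one hx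
  rw [maximalIdeal_height_eq_ringKrullDim, ← IsRegularLocalRing.spanFinrank_maximalIdeal] at hdim
  refine ENat.WithBot.add_le_add_one_right_iff.1 (le_trans ?_ hdim)
  exact_mod_cast hlt

theorem exists_mem_maximalIdeal_notMem_sq [IsLocalRing A] [IsNoetherianRing A]
    (h : maximalIdeal A ∉ minimalPrimes A) :
    ∃ x ∈ maximalIdeal A, x ∉ maximalIdeal A ^ 2 ∧ ∀ P ∈ minimalPrimes A, x ∉ P := by
  have hle (P : Ideal A) (hP : P ∈ minimalPrimes A) : ¬ maximalIdeal A ≤ P := fun hle =>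
    h (le_antisymm hle (le_maximalIdeal hP.1.1.ne_top) ▸ hP)
  have hsq : ¬ maximalIdeal A ≤ maximalIdeal A ^ 2 := fun hsq => by
    obtain ⟨P, hP, -⟩ := Ideal.exists_minimalPrimes_le (bot_le : ⊥ ≤ maximalIdeal A)
    refine hle P hP (le_trans ?_ bot_le)
    refine Submodule.le_of_le_smul_of_le_jacobson_bot (I := maximalIdeal A)
      (maximalIdeal A).fg_of_isNoetherianRing (maximalIdeal_le_jacobson _) ?_
    rwa [bot_sup_eq, smul_eq_mul, ← sq]
  by_contra! hcon
  have hfin := minimalPrimes.finite_of_isNoetherianRing A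
  classical
  have hcover : (maximalIdeal A : Set A) ⊆
      ⋃ P ∈ (↑(insert (maximalIdeal A ^ 2) hfin.toFinset) : Set (Ideal A)), (P : Set A) := by
    intro x hx
    simp only [Finset.coe_insert, Set.Finite.coe_toFinset, Set.biUnion_insert, Set.mem_union,
      Set.mem_iUnion, SetLike.mem_coe, exists_prop]
    exact or_iff_not_imp_left.2 (hcon x hx)
  obtain ⟨P, hP, hmP⟩ := (Ideal.subset_union_prime (f := id) (maximalIdeal A ^ 2)
    (maximalIdeal A ^ 2) fun P hP hP2 _ => by
      exact (hfin.mem_toFinset.1 (Finset.mem_of_mem_insert_of_ne hP hP2)).1.1).1 hcover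
  obtain rfl | hP := Finset.mem_insert.1 hP
  · exact hsq hmP
  · exact hle P (hfin.mem_toFinset.1 hP) hmP

theorem isField_of_maximalIdeal_mem_minimalPrimes [IsRegularLocalRing A]
    (h : maximalIdeal A ∈ minimalPrimes A) : IsField A := by
  rw [isField_iff_maximalIdeal_eq, ← Submodule.spanFinrank_eq_zero_iff_eq_bot
    (maximalIdeal A).fg_of_isNoetherianRing]
  have hdim := IsRegularLocalRing.spanFinrank_maximalIdeal (R := A)
  rw [← maximalIdeal_height_eq_ringKrullDim, Ideal.height_eq_zero_iff.2 h] at hdim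
  exact_mod_cast hdim

theorem isRegularLocalRing_induction {motive : ∀ (A : Type u) [CommRing A], Prop}
    (isField : ∀ (A : Type u) [CommRing A], IsField A → motive A)
    (quotient : ∀ (A : Type u) [CommRing A] [IsRegularLocalRing A], ∀ x ∈ maximalIdeal A,
      (∀ P ∈ minimalPrimes A, x ∉ P) → motive (A ⧸ Ideal.span {x}) → motive A)
    (A : Type u) [CommRing A] [IsRegularLocalRing A] : motive A := by
  suffices H : ∀ n : ℕ, ∀ (A : Type u) [CommRing A] [IsRegularLocalRing A],
      (maximalIdeal A).spanFinrank = n → motive A from H _ A rfl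
  intro n
  induction n using Nat.strong_induction_on with
  | h n ih =>
    rintro A _ _ rfl
    by_cases hmin : maximalIdeal A ∈ minimalPrimes A
    · exact isField A (isField_of_maximalIdeal_mem_minimalPrimes hmin)
    · obtain ⟨x, hx, hx2, hxmin⟩ := exists_mem_maximalIdeal_notMem_sq hmin
      obtain ⟨hreg, hlt⟩ := isRegularLocalRing_quotient_span_singleton hx hx2
      exact quotient A x hx hxmin (ih _ hlt _ rfl)

theorem isDomain_of_isRegularLocalRing (A : Type u) [CommRing A] [IsRegularLocalRing A] :
    IsDomain A := by
  refine isRegularLocalRing_induction (motive := fun A _ => IsDomain A)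
    (fun A _ hA => hA.isDomain) (fun A _ _ x hx hxmin ih => ?_) A
  have hprime := (Ideal.Quotient.isDomain_iff_prime (Ideal.span {x})).1 ih
  obtain ⟨P, hP, hPx⟩ := Ideal.exists_minimalPrimes_le (bot_le : ⊥ ≤ Ideal.span {x})
  have hbot : P = ⊥ := by
    refine le_bot_iff.1 <| Submodule.le_of_le_smul_of_le_jacobson_bot (I := maximalIdeal A)
      P.fg_of_isNoetherianRing (maximalIdeal_le_jacobson _) fun z hz => ?_
    obtain ⟨w, rfl⟩ := Ideal.mem_span_singleton.1 (hPx hz)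
    rw [bot_sup_eq]
    exact Submodule.smul_mem_smul hx ((hP.1.1.mem_or_mem hz).resolve_left (hxmin P hP))
  have : (⊥ : Ideal A).IsPrime := hbot ▸ hP.1.1
  exact IsDomain.of_bot_isPrime A

theorem charP_of_ringHom {B : Type*} [CommRing B] [Nontrivial B] (f : A →+* B) (p : ℕ)
    [Fact p.Prime] [CharP A p] : CharP B p :=
  charP_of_injective_ringHom (f.comp (ZMod.castHom dvd_rfl A)).injective p

theorem reflectsRelations_frobenius_of_isRegularLocalRing (p : ℕ) [Fact p.Prime] (A : Type u)
    [CommRing A] [IsRegularLocalRing A] [CharP A p] :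
    ReflectsRelations (LinearMap.frobenius A A p) := by
  refine isRegularLocalRing_induction
    (motive := fun A _ => ∀ [CharP A p], ReflectsRelations (LinearMap.frobenius A A p))
    (fun A _ hA _ => ?_) (fun A _ _ x hx hxmin ih _ => ?_) A
  · let := hA.toField
    exact reflectsRelations_frobenius_field A
  · have : IsDomain A := isDomain_of_isRegularLocalRing A
    have hx0 : x ≠ 0 := fun h =>
      hxmin ⊥ (by simp [minimalPrimes, IsDomain.minimalPrimes_eq_singleton_bot]) h
    have : Nontrivial (A ⧸ Ideal.span {x}) := Ideal.Quotient.nontrivial_iff.2 <|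
      mt Ideal.span_singleton_eq_top.1 ((mem_maximalIdeal x).1 hx)
    have : CharP (A ⧸ Ideal.span {x}) p := charP_of_ringHom (Ideal.Quotient.mk (Ideal.span {x})) p
    exact reflectsRelations_frobenius_of_quotient (maximalIdeal_le_jacobson ⊥ hx)
      (IsSMulRegular.of_ne_zero hx0) ih

end RegularLocalRing

section Localization

variable {R : Type*} [CommRing R] {p : ℕ} (S : Submonoid R) (A : Type*) [CommRing A] [Algebra R A]
  {ι : Type*}

variable (R ι) in
/-- The entrywise algebra map between free modules. -/
abbrev entrywiseAlgebraMap : (ι → R) →ₗ[R] (ι → A) :=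
  .pi fun i => Algebra.linearMap R A ∘ₗ .proj i

variable [IsLocalization S A]

theorem relations_algebraMap_le [Fintype ι] (a : ι → R) :
    relations A (algebraMap R A ∘ a) ≤
      (relations R a).localized' A S (entrywiseAlgebraMap R A ι) := by
  intro w hw
  obtain ⟨⟨v, s⟩, hs : s • w = entrywiseAlgebraMap R A ι v⟩ :=
    IsLocalizedModule.surj S (entrywiseAlgebraMap R A ι) w
  have hv : algebraMap R A (∑ i, v i * a i) = 0 := by
    have hw : ∑ i, w i * algebraMap R A (a i) = 0 := hw
    have hvi (i : ι) : algebraMap R A (v i) = s • w i := (congrFun hs i).symm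
    simp only [map_sum, map_mul, hvi, smul_mul_assoc, ← Finset.smul_sum, hw, smul_zero]
  obtain ⟨t, ht⟩ := (IsLocalization.map_eq_zero_iff S A _).1 hv
  refine (Submodule.mem_localized' _ _ _ _ _).2 ⟨(t : R) • v, ?_, t * s, ?_⟩
  · rw [mem_relations]
    simpa only [Pi.smul_apply, smul_eq_mul, mul_assoc, ← Finset.mul_sum] using ht
  · rw [IsLocalizedModule.mk'_eq_iff, map_smul, ← hs, mul_smul]
    rfl

theorem bracket_localized'_le [Finite ι] [ExpChar R p] [ExpChar A p] (V : Submodule R (ι → R)) :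
    bracket p 1 (V.localized' A S (entrywiseAlgebraMap R A ι)) ≤
      (bracket p 1 V).localized' A S (entrywiseAlgebraMap R A ι) := by
  rw [Submodule.localized'_eq_span, bracket, frobeniusSpan_span, Set.image_image,
    Submodule.localized'_eq_span]
  refine Submodule.span_mono ?_
  rintro _ ⟨r, hr, rfl⟩
  exact ⟨_, iter_mem_frobeniusSpan 1 hr, by ext; simp [iter_entrywiseFrobenius]⟩

theorem mem_localClosure_of_mem_localized' [Finite ι] (P : PrimeSpectrum R)
    [IsLocalization.AtPrime A P.asIdeal] {B : Submodule R (ι → R)} {v : ι → R}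
    (hv : entrywiseAlgebraMap R A ι v ∈
      B.localized' A P.asIdeal.primeCompl (entrywiseAlgebraMap R A ι)) :
    v ∈ localClosure P B := by
  obtain ⟨m, hm, s, hs⟩ := (Submodule.mem_localized' _ _ _ _ _).1 hv
  rw [IsLocalizedModule.mk'_eq_iff, Submonoid.smul_def, ← map_smul] at hs
  obtain ⟨c, hc⟩ := IsLocalizedModule.exists_of_eq (S := P.asIdeal.primeCompl) hs
  refine ⟨c * s, mul_mem c.2 s.2, ?_⟩
  rw [mul_smul]
  exact hc ▸ B.smul_mem c hm

theorem reflectsRelations_frobenius_of_localization [ExpChar R p]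
    [∀ P : PrimeSpectrum R, ExpChar (Localization.AtPrime P.asIdeal) p]
    (h : ∀ P : PrimeSpectrum R,
      ReflectsRelations (LinearMap.frobenius (Localization.AtPrime P.asIdeal)
        (Localization.AtPrime P.asIdeal) p)) :
    ReflectsRelations (LinearMap.frobenius R R p) := by
  intro ι _ a v hv
  refine mem_of_forall_mem_localClosure fun P =>
    mem_localClosure_of_mem_localized' (Localization.AtPrime P.asIdeal) P ?_
  refine bracket_localized'_le _ _ _ <| frobeniusSpan_mono 1 (relations_algebraMap_le _ _ a) <|
    h P _ ?_
  have hv : ∑ i, v i * a i ^ p = 0 := hv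
  have := congrArg (algebraMap R (Localization.AtPrime P.asIdeal)) hv
  simpa [mem_relations, LinearMap.frobenius_def] using this

/-- The easy direction of Kunz's theorem. -/
theorem reflectsRelations_frobenius_of_isRegularRing (p : ℕ) [Fact p.Prime] [CharP R p]
    [IsRegularRing R] : ReflectsRelations (LinearMap.frobenius R R p) := by
  have (P : PrimeSpectrum R) : CharP (Localization.AtPrime P.asIdeal) p :=
    charP_of_ringHom (algebraMap R _) p
  exact reflectsRelations_frobenius_of_localization fun P =>
    reflectsRelations_frobenius_of_isRegularLocalRing p _

end Localization

end FrobeniusModule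

namespace FrobeniusModule

open CategoryTheory Limits

universe u v

section HomologyClass

variable {R : Type u} [Ring R] (S : ShortComplex (ModuleCat.{v} R))

/-- The homology class of a cycle of a short complex of modules. -/
noncomputable def homologyClass (x : S.X₂) (hx : S.g x = 0) : S.homology :=
  S.homologyπ (S.moduleCatCyclesIso.inv ⟨x, hx⟩)

theorem exists_homologyClass_eq (y : S.homology) : ∃ x hx, homologyClass S x hx = y := by
  obtain ⟨c, rfl⟩ := (ModuleCat.epi_iff_surjective S.homologyπ).1 inferInstance y
  obtain ⟨z, rfl⟩ := (ModuleCat.epi_iff_surjective S.moduleCatCyclesIso.inv).1 inferInstance c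
  exact ⟨z.1, z.2, rfl⟩

theorem homologyClass_smul (s : R) (x : S.X₂) (hx : S.g x = 0) (hs : S.g (s • x) = 0) :
    homologyClass S (s • x) hs = s • homologyClass S x hx :=
  (congrArg S.homologyπ (map_smul S.moduleCatCyclesIso.inv.hom s ⟨x, hx⟩)).trans
    (map_smul S.homologyπ.hom s _)

theorem homologyClass_eq_zero_iff (x : S.X₂) (hx : S.g x = 0) :
    homologyClass S x hx = 0 ↔ ∃ w, S.f w = x := by
  have hπ : homologyClass S x hx =
      S.moduleCatHomologyIso.inv (S.moduleCatLeftHomologyData.π ⟨x, hx⟩) :=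
    congrArg (fun f => f.hom ⟨x, hx⟩) S.moduleCatCyclesIso_inv_π
  rw [hπ, map_eq_zero_iff _ ((ModuleCat.mono_iff_injective _).1 inferInstance)]
  refine (Submodule.Quotient.mk_eq_zero (LinearMap.range S.moduleCatToCycles)).trans ?_
  exact exists_congr fun w => Subtype.ext_iff

theorem iCycles_moduleCatCyclesIso_inv (x : S.X₂) (hx : S.g x = 0) :
    S.iCycles (S.moduleCatCyclesIso.inv ⟨x, hx⟩) = x :=
  congrArg (fun f => f.hom ⟨x, hx⟩) S.moduleCatCyclesIso_inv_iCycles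

variable {S} in
theorem homologyMap_homologyClass {S' : ShortComplex (ModuleCat.{v} R)} (φ : S ⟶ S') (x : S.X₂)
    (hx : S.g x = 0) (hx' : S'.g (φ.τ₂ x) = 0) :
    ShortComplex.homologyMap φ (homologyClass S x hx) = homologyClass S' (φ.τ₂ x) hx' := by
  refine (ConcreteCategory.congr_hom (ShortComplex.homologyπ_naturality φ) _).trans ?_
  refine congrArg S'.homologyπ ((ModuleCat.mono_iff_injective S'.iCycles).1 inferInstance ?_)
  refine (ConcreteCategory.congr_hom (ShortComplex.cyclesMap_i φ) _).trans ?_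
  rw [iCycles_moduleCatCyclesIso_inv]
  exact congrArg φ.τ₂ (iCycles_moduleCatCyclesIso_inv S x hx)

end HomologyClass

section CochainClass

variable {R : Type u} [CommRing R] {K L : ChainComplex (ModuleCat.{v} R) ℕ}
  (Y : ModuleCat.{v} R) (n : ℕ)

/-- The map of cochain complexes `Hom(L, Y) ⟶ Hom(K, Y)` induced by a map of chain complexes. -/
noncomputable def linearYonedaMap (φ : K ⟶ L) : L.linearYonedaObj R Y ⟶ K.linearYonedaObj R Y :=
  (HomologicalComplex.unopFunctor _ _).map
    ((((linearYoneda R (ModuleCat.{v} R)).obj Y).rightOp.mapHomologicalComplex _).map φ).op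

variable {Y n}

theorem exists_linearYonedaObj_f_eq_iff (ψ : K.X n ⟶ Y) :
    (∃ w, ((K.linearYonedaObj R Y).sc n).f w = ψ) ↔ ∃ m, ∃ w : K.X m ⟶ Y, K.d n m ≫ w = ψ := by
  refine ⟨fun ⟨w, hw⟩ => ⟨_, w, hw⟩, fun ⟨m, w, hw⟩ => ?_⟩
  by_cases hm : (ComplexShape.up ℕ).prev n = m
  · subst hm
    exact ⟨w, hw⟩
  · have hd : K.d n m = 0 := K.shape _ _ fun h => hm ((ComplexShape.up ℕ).prev_eq' h)
    rw [hd, zero_comp] at hw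
    exact ⟨0, (map_zero _).trans hw⟩

/-- The class of a cocycle in the cohomology of `Hom(K, Y)`. -/
noncomputable def cochainClass (ψ : K.X n ⟶ Y) (hψ : ∀ m, K.d m n ≫ ψ = 0) :
    (K.linearYonedaObj R Y).homology n :=
  homologyClass ((K.linearYonedaObj R Y).sc n) ψ (hψ _)

theorem exists_cochainClass_eq (z : (K.linearYonedaObj R Y).homology n) :
    ∃ (ψ : K.X n ⟶ Y) (hψ : ∀ m, K.d m n ≫ ψ = 0), cochainClass ψ hψ = z := by
  obtain ⟨ψ, hψ, h⟩ := exists_homologyClass_eq _ z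
  refine ⟨ψ, fun m => ?_, h⟩
  by_cases hm : (ComplexShape.up ℕ).next n = m
  · subst hm
    exact hψ
  · have hd : K.d m n = 0 := K.shape _ _ fun h => hm ((ComplexShape.up ℕ).next_eq' h)
    rw [hd]
    exact zero_comp

theorem cochainClass_eq_zero_iff (ψ : K.X n ⟶ Y) (hψ : ∀ m, K.d m n ≫ ψ = 0) :
    cochainClass ψ hψ = 0 ↔ ∃ m, ∃ w : K.X m ⟶ Y, K.d n m ≫ w = ψ :=
  (homologyClass_eq_zero_iff _ _ _).trans (exists_linearYonedaObj_f_eq_iff ψ)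

theorem homologyMap_cochainClass (φ : K ⟶ L) (ψ : L.X n ⟶ Y) (hψ : ∀ m, L.d m n ≫ ψ = 0)
    (hψ' : ∀ m, K.d m n ≫ φ.f n ≫ ψ = 0) :
    HomologicalComplex.homologyMap (linearYonedaMap Y φ) n (cochainClass ψ hψ) =
      cochainClass (φ.f n ≫ ψ) hψ' :=
  homologyMap_homologyClass
    ((HomologicalComplex.shortComplexFunctor _ _ n).map (linearYonedaMap Y φ)) ψ (hψ _) (hψ' _)

end CochainClass

section ExtClass

variable {R : Type u} [CommRing R] {X X' Y : ModuleCat.{u} R} {n : ℕ}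

theorem isoExt_naturality (f : X ⟶ X') (P : ProjectiveResolution X) (Q : ProjectiveResolution X')
    (φ : P.complex ⟶ Q.complex) (hφ : φ.f 0 ≫ Q.π.f 0 = P.π.f 0 ≫ f) (n : ℕ)
    (Y : ModuleCat.{u} R) :
    ((Ext R (ModuleCat.{u} R) n).map f.op).app Y ≫ (P.isoExt (R := R) n Y).hom =
      (Q.isoExt (R := R) n Y).hom ≫ HomologicalComplex.homologyMap (linearYonedaMap Y φ) n := by
  have hinv := ProjectiveResolution.isoLeftDerivedObj_inv_naturality f P Q φ hφ
    (((linearYoneda R (ModuleCat.{u} R)).obj Y).rightOp) n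
  have hop := HomologicalComplex.homologyOp_hom_naturality (linearYonedaMap Y φ) n
  exact Quiver.Hom.op_inj ((CommSq.mk hop.symm).horiz_inv.horiz_comp ⟨hinv⟩).w

/-- The class in `Ext` of a cocycle on a projective resolution. -/
noncomputable def extClass (P : ProjectiveResolution X) (ψ : P.complex.X n ⟶ Y)
    (hψ : ∀ m, P.complex.d m n ≫ ψ = 0) :
    ((Ext R (ModuleCat.{u} R) n).obj (Opposite.op X)).obj Y :=
  (P.isoExt (R := R) n Y).inv (cochainClass ψ hψ)

variable (P : ProjectiveResolution X)

theorem exists_extClass_eq (y : ((Ext R (ModuleCat.{u} R) n).obj (Opposite.op X)).obj Y) :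
    ∃ (ψ : P.complex.X n ⟶ Y) (hψ : ∀ m, P.complex.d m n ≫ ψ = 0), extClass P ψ hψ = y := by
  obtain ⟨z, rfl⟩ := (ModuleCat.epi_iff_surjective (P.isoExt (R := R) n Y).inv).1 inferInstance y
  obtain ⟨ψ, hψ, rfl⟩ := exists_cochainClass_eq z
  exact ⟨ψ, hψ, rfl⟩

theorem extClass_smul (s : R) (ψ : P.complex.X n ⟶ Y) (hψ : ∀ m, P.complex.d m n ≫ ψ = 0)
    (hs : ∀ m, P.complex.d m n ≫ (s • ψ) = 0) : extClass P (s • ψ) hs = s • extClass P ψ hψ :=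
  (congrArg _ (homologyClass_smul _ s _ (hψ _) (hs _))).trans (map_smul _ _ _)

theorem extClass_eq_zero_iff (ψ : P.complex.X n ⟶ Y) (hψ : ∀ m, P.complex.d m n ≫ ψ = 0) :
    extClass P ψ hψ = 0 ↔ ∃ m, ∃ w : P.complex.X m ⟶ Y, P.complex.d n m ≫ w = ψ := by
  rw [← cochainClass_eq_zero_iff ψ hψ, extClass,
    map_eq_zero_iff _ ((ModuleCat.mono_iff_injective _).1 inferInstance)]

theorem ext_map_extClass (f : X ⟶ X') (Q : ProjectiveResolution X') (φ : P.complex ⟶ Q.complex)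
    (hφ : φ.f 0 ≫ Q.π.f 0 = P.π.f 0 ≫ f) (ψ : Q.complex.X n ⟶ Y)
    (hψ : ∀ m, Q.complex.d m n ≫ ψ = 0) (hψ' : ∀ m, P.complex.d m n ≫ φ.f n ≫ ψ = 0) :
    ((Ext R (ModuleCat.{u} R) n).map f.op).app Y (extClass Q ψ hψ) =
      extClass P (φ.f n ≫ ψ) hψ' := by
  have hinv : ((Ext R (ModuleCat.{u} R) n).map f.op).app Y =
      (Q.isoExt (R := R) n Y).hom ≫ HomologicalComplex.homologyMap (linearYonedaMap Y φ) n ≫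
        (P.isoExt (R := R) n Y).inv := by
    rw [← Category.assoc, ← isoExt_naturality f P Q φ hφ, Category.assoc, Iso.hom_inv_id,
      Category.comp_id]
  have hQ : (Q.isoExt (R := R) n Y).hom (extClass Q ψ hψ) = cochainClass ψ hψ :=
    congrArg (fun g => g.hom (cochainClass ψ hψ)) (Q.isoExt (R := R) n Y).inv_hom_id
  rw [hinv]
  refine congrArg (P.isoExt (R := R) n Y).inv ((congrArg _ hQ).trans ?_)
  exact homologyMap_cochainClass φ ψ hψ hψ'

end ExtClass

end FrobeniusModule

namespace FrobeniusModule

open CategoryTheory Limits Opposite localCohomology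

universe u

section CofinalDiagram

variable {R : Type u} [CommRing R] {I : Ideal R} {J : ℕ → Ideal R}

/-- The descending chain of ideals `J`, as a diagram. -/
def chainDiagram (hJ : Antitone J) : ℕᵒᵖ ⥤ Ideal R where
  obj t := J (unop t)
  map w := ⟨⟨hJ w.unop.down.down⟩⟩

/-- A descending chain of ideals whose radicals contain `I`, as a diagram in the category of all
such ideals. -/
def chainToSelfLERadical (hJ : Antitone J) (hrad : ∀ e, I ≤ (J e).radical) :
    ℕᵒᵖ ⥤ SelfLERadical I :=
  ObjectProperty.lift _ (chainDiagram hJ) fun t => hrad (unop t)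

theorem initial_chainToSelfLERadical [IsNoetherianRing R] (hJ : Antitone J)
    (hrad : ∀ e, I ≤ (J e).radical) (hpow : ∀ m, ∃ e, J e ≤ I ^ m) :
    (chainToSelfLERadical hJ hrad).Initial where
  out K := by
    apply +allowSynthFailures zigzag_isConnected
    · obtain ⟨m, hm⟩ := Ideal.exists_pow_le_of_le_radical_of_fg K.2 (IsNoetherian.noetherian I)
      obtain ⟨e, he⟩ := hpow m
      exact ⟨CostructuredArrow.mk
        (⟨⟨⟨he.trans hm⟩⟩⟩ : (chainToSelfLERadical hJ hrad).obj (op e) ⟶ K)⟩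
    · intro j₁ j₂
      apply Relation.ReflTransGen.single
      rcases le_total (unop j₁.left) (unop j₂.left) with h | h
      · exact Or.inr ⟨CostructuredArrow.homMk (homOfLE h).op rfl⟩
      · exact Or.inl ⟨CostructuredArrow.homMk (homOfLE h).op rfl⟩

/-- Local cohomology as a direct limit along any descending chain of ideals cofinal with the powers
of `I`. -/
noncomputable def localCohomologyIsoOfChain [IsNoetherianRing R] (hJ : Antitone J)
    (hrad : ∀ e, I ≤ (J e).radical) (hpow : ∀ m, ∃ e, J e ≤ I ^ m) (i : ℕ) :
    localCohomology I i ≅ ofDiagram.{u, 0} (chainDiagram hJ) i :=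
  have := initial_chainToSelfLERadical hJ hrad hpow
  (isoSelfLERadical I i).symm ≪≫
    (isoOfFinal.{u, u, 0} (chainToSelfLERadical hJ hrad) (selfLERadicalDiagram I) i).symm ≪≫
      HasColimit.isoOfNatIso.{0, 0, u + 1, u + 1} (Iso.refl.{u + 1, u + 1} _)

/-- The map `Extⁱ(R ⧸ J e, Y) ⟶ Extⁱ(R ⧸ J (e + k), Y)` of the direct system computing local
cohomology. -/
noncomputable def extTransition (hJ : Antitone J) (i : ℕ) (Y : ModuleCat.{u} R) (e k : ℕ) :
    ((Ext R (ModuleCat.{u} R) i).obj (op (ModuleCat.of R (R ⧸ J e)))).obj Y ⟶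
      ((Ext R (ModuleCat.{u} R) i).obj (op (ModuleCat.of R (R ⧸ J (e + k))))).obj Y :=
  ((Ext R (ModuleCat.{u} R) i).map (ModuleCat.ofHom (Submodule.mapQ _ _ LinearMap.id
    (hJ (Nat.le_add_right e k)))).op).app Y

theorem notMem_support_isColimit_iff {F : ℕᵒᵖᵒᵖ ⥤ ModuleCat.{u} R} {D : Cocone F}
    (hD : IsColimit D) {P : PrimeSpectrum R} : P ∉ Module.support R D.pt ↔
      ∀ (e : ℕ) (x : F.obj (op (op e))), ∃ s ∉ P.asIdeal, ∃ k,
        F.map (homOfLE (Nat.le_add_right e k)).op.op (s • x) = 0 := by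
  have : PreservesFilteredColimitsOfSize.{0, 0} (forget (ModuleCat.{u} R)) :=
    preservesFilteredColimitsOfSize_shrink _
  rw [Module.notMem_support_iff']
  refine ⟨fun h e x => ?_, fun h m => ?_⟩
  · obtain ⟨s, hs, hsx⟩ := h (D.ι.app (op (op e)) x)
    have hι : D.ι.app (op (op e)) (s • x) = D.ι.app (op (op e)) (0 : F.obj (op (op e))) := by
      rw [map_zero, map_smul, hsx]
    obtain ⟨⟨⟨l⟩⟩, f, g, hfg⟩ := Concrete.isColimit_exists_of_rep_eq _ hD _ _ hι
    obtain ⟨k, rfl⟩ := Nat.exists_eq_add_of_le f.unop.unop.down.down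
    exact ⟨s, hs, k, hfg.trans (map_zero _)⟩
  · obtain ⟨⟨⟨e⟩⟩, x, rfl⟩ := Concrete.isColimit_exists_rep _ hD m
    obtain ⟨s, hs, k, hk⟩ := h e x
    have hw := ConcreteCategory.congr_hom (D.w (homOfLE (Nat.le_add_right e k)).op.op) (s • x)
    refine ⟨s, hs, ?_⟩
    rw [← map_smul, ← hw, ConcreteCategory.comp_apply, hk, map_zero]

theorem notMem_support_localCohomology_iff [IsNoetherianRing R] (hJ : Antitone J)
    (hrad : ∀ e, I ≤ (J e).radical) (hpow : ∀ m, ∃ e, J e ≤ I ^ m) (i : ℕ) (Y : ModuleCat.{u} R)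
    (P : PrimeSpectrum R) : P ∉ Module.support R ((localCohomology I i).obj Y) ↔
      ∀ (e : ℕ) (x : ((Ext R (ModuleCat.{u} R) i).obj (op (ModuleCat.of R (R ⧸ J e)))).obj Y),
        ∃ s ∉ P.asIdeal, ∃ k, extTransition hJ i Y e k (s • x) = 0 := by
  have := hasColimitDiagram.{u, 0} (chainDiagram hJ) i
  have hcolim : IsColimit (((evaluation _ _).obj Y).mapCocone
      (colimit.cocone (diagram (chainDiagram hJ) i))) :=
    isColimitOfPreserves _ (colimit.isColimit _)
  rw [LinearEquiv.support_eq ((localCohomologyIsoOfChain hJ hrad hpow i).app Y).toLinearEquiv]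
  exact notMem_support_isColimit_iff hcolim

end CofinalDiagram

section FrobeniusChain

variable {R : Type u} [CommRing R] {p : ℕ} [ExpChar R p]

theorem idealBracket_antitone (I : Ideal R) : Antitone fun e => idealBracket p e I := by
  intro a b hab
  obtain ⟨k, rfl⟩ := Nat.exists_eq_add_of_le hab
  refine frobeniusSpan_le.2 fun x hx => ?_
  rw [Submodule.mem_comap, iter_frobenius, pow_add, pow_mul]
  exact Ideal.pow_mem_of_mem _ (pow_mem_idealBracket a hx) _ (pow_pos (expChar_pos R p) _)

theorem idealBracket_le_pow (e : ℕ) (I : Ideal R) : idealBracket p e I ≤ I ^ p ^ e :=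
  frobeniusSpan_le.2 fun x hx => by
    rw [Submodule.mem_comap, iter_frobenius]
    exact Ideal.pow_mem_pow hx _

theorem exists_idealBracket_le_pow (hp : 1 < p) (I : Ideal R) (m : ℕ) :
    ∃ e, idealBracket p e I ≤ I ^ m :=
  ⟨m, (idealBracket_le_pow m I).trans (Ideal.pow_le_pow_right (Nat.lt_pow_self hp).le)⟩

theorem le_radical_idealBracket (I : Ideal R) (e : ℕ) : I ≤ (idealBracket p e I).radical :=
  Ideal.le_radical.trans (radical_idealBracket e I).ge

end FrobeniusChain

end FrobeniusModule

namespace FrobeniusModule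

open CategoryTheory Limits Opposite Matrix

universe u

variable {R : Type u} [CommRing R] {ι : ℕ → Type}
  {d d' : ∀ k, Matrix (ι (k + 1)) (ι k) R} {I I' : Ideal R}

section Resolution

variable [∀ k, Fintype (ι k)] [Unique (ι 0)]

/-- The matrices `d k`, acting on row vectors, form a resolution of `R ⧸ I` by finite free modules,
the first of which has rank one. -/
structure IsFreeResolution (d : ∀ k, Matrix (ι (k + 1)) (ι k) R) (I : Ideal R) : Prop where
  range_eq : LinearMap.range (d 0).vecMulLinear = Submodule.comap (LinearMap.proj default) I
  exact : ∀ k, LinearMap.ker (d k).vecMulLinear = LinearMap.range (d (k + 1)).vecMulLinear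

namespace IsFreeResolution

theorem row_zero_mem (h : IsFreeResolution d I) (i : ι 1) : d 0 i default ∈ I := by
  classical
  have hi : d 0 i ∈ LinearMap.range (d 0).vecMulLinear :=
    ⟨Pi.single i 1, by rw [vecMulLinear_apply, single_one_vecMul]; rfl⟩
  rwa [h.range_eq] at hi

theorem vecMul_vecMul_eq_zero (h : IsFreeResolution d I) (k : ℕ) (r : ι (k + 2) → R) :
    r ᵥ* d (k + 1) ᵥ* d k = 0 := by
  have hr : r ᵥ* d (k + 1) ∈ LinearMap.range (d (k + 1)).vecMulLinear := ⟨r, rfl⟩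
  rwa [← h.exact] at hr

theorem mul_eq_zero (h : IsFreeResolution d I) (k : ℕ) : d (k + 1) * d k = 0 := by
  classical
  exact ext_of_single_vecMul fun i => by
    rw [← vecMul_vecMul, h.vecMul_vecMul_eq_zero, vecMul_zero]

/-- The chain complex of free modules with differentials `d k`. -/
noncomputable def complex (h : IsFreeResolution d I) : ChainComplex (ModuleCat.{u} R) ℕ :=
  ChainComplex.of (fun k => ModuleCat.of R (ι k → R))
    (fun k => ModuleCat.ofHom (d k).vecMulLinear) fun k =>
      ModuleCat.hom_ext (LinearMap.ext (h.vecMul_vecMul_eq_zero k))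

theorem complex_d (h : IsFreeResolution d I) (k : ℕ) :
    h.complex.d (k + 1) k = ModuleCat.ofHom (d k).vecMulLinear :=
  ChainComplex.of_d (fun k => ModuleCat.of R (ι k → R))
    (fun k => ModuleCat.ofHom (d k).vecMulLinear) k

theorem complex_d_apply (h : IsFreeResolution d I) (k : ℕ) (r : ι (k + 1) → R) :
    (h.complex.d (k + 1) k).hom r = r ᵥ* d k :=
  congrArg (fun f => f.hom r) (h.complex_d k)

/-- The augmentation of the resolution. -/
noncomputable def augmentation (h : IsFreeResolution d I) :
    h.complex.X 0 ⟶ ModuleCat.of R (R ⧸ I) :=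
  ModuleCat.ofHom (I.mkQ ∘ₗ (LinearMap.proj default : (ι 0 → R) →ₗ[R] R))

theorem d_augmentation (h : IsFreeResolution d I) : h.complex.d 1 0 ≫ h.augmentation = 0 := by
  rw [h.complex_d 0]
  refine ModuleCat.hom_ext (LinearMap.ext fun r => (Submodule.Quotient.mk_eq_zero _).2 ?_)
  exact h.range_eq.le ⟨r, rfl⟩

theorem augmentation_surjective (h : IsFreeResolution d I) :
    Function.Surjective h.augmentation.hom := fun y => by
  obtain ⟨x, rfl⟩ := Submodule.Quotient.mk_surjective _ y
  exact ⟨fun _ => x, rfl⟩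

/-- The augmentation as a chain map. -/
noncomputable def π (h : IsFreeResolution d I) :
    h.complex ⟶ (ChainComplex.single₀ (ModuleCat.{u} R)).obj (ModuleCat.of R (R ⧸ I)) :=
  (ChainComplex.toSingle₀Equiv _ _).symm ⟨h.augmentation, h.d_augmentation⟩

theorem π_f_zero (h : IsFreeResolution d I) : h.π.f 0 = h.augmentation :=
  ChainComplex.toSingle₀Equiv_symm_apply_f_zero h.augmentation h.d_augmentation

theorem quasiIsoAt_zero (h : IsFreeResolution d I) : QuasiIsoAt h.π 0 := by
  rw [ChainComplex.quasiIsoAt₀_iff, ShortComplex.quasiIso_iff_of_zeros' _ rfl rfl rfl,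
    ShortComplex.moduleCat_exact_iff]
  constructor
  · intro (x : ι 0 → R) hx
    have hx' : h.augmentation.hom x = 0 := (congrArg (fun f => f.hom x) h.π_f_zero).symm.trans hx
    obtain ⟨s, hs⟩ := h.range_eq.ge ((Submodule.Quotient.mk_eq_zero I).1 hx')
    exact ⟨s, (h.complex_d_apply 0 s).trans hs⟩
  · change Epi (h.π.f 0)
    rw [h.π_f_zero]
    exact (ModuleCat.epi_iff_surjective _).2 h.augmentation_surjective

theorem quasiIsoAt_succ (h : IsFreeResolution d I) (k : ℕ) : QuasiIsoAt h.π (k + 1) := by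
  rw [quasiIsoAt_iff_exactAt' _ _ (ChainComplex.exactAt_succ_single_obj _ _),
    HomologicalComplex.exactAt_iff' _ (k + 1 + 1) (k + 1) k (by simp) (by simp),
    ShortComplex.moduleCat_exact_iff]
  intro (x : ι (k + 1) → R) hx
  have hx' : x ∈ LinearMap.ker (d k).vecMulLinear := (h.complex_d_apply k x).symm.trans hx
  rw [h.exact] at hx'
  obtain ⟨s, hs⟩ := hx'
  exact ⟨s, (h.complex_d_apply (k + 1) s).trans hs⟩

/-- The projective resolution of `R ⧸ I` given by the matrices `d k`. -/
noncomputable def resolution (h : IsFreeResolution d I) :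
    ProjectiveResolution (ModuleCat.of R (R ⧸ I)) where
  complex := h.complex
  projective k := inferInstanceAs (Projective (ModuleCat.of R (ι k → R)))
  π := h.π
  quasiIso := ⟨fun
    | 0 => h.quasiIsoAt_zero
    | k + 1 => h.quasiIsoAt_succ k⟩

/-- The chain map between resolutions given by matrices `V k`. -/
noncomputable def chainMap (h : IsFreeResolution d I) (h' : IsFreeResolution d' I')
    (V : ∀ k, Matrix (ι k) (ι k) R) (hV : ∀ k, d k * V k = V (k + 1) * d' k) :
    h.resolution.complex ⟶ h'.resolution.complex where
  f k := (ModuleCat.ofHom (V k).vecMulLinear :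
    ModuleCat.of R (ι k → R) ⟶ ModuleCat.of R (ι k → R))
  comm' i k := by
    rintro (rfl : k + 1 = i)
    refine (congrArg (_ ≫ ·) (h'.complex_d k)).trans
      (Eq.trans ?_ (congrArg (· ≫ _) (h.complex_d k)).symm)
    refine ModuleCat.hom_ext (LinearMap.ext fun (r : ι (k + 1) → R) => ?_)
    change r ᵥ* V (k + 1) ᵥ* d' k = r ᵥ* d k ᵥ* V k
    rw [vecMul_vecMul, vecMul_vecMul, hV]

theorem chainMap_augmentation [DecidableEq (ι 0)] (h : IsFreeResolution d I)
    (h' : IsFreeResolution d' I') (V : ∀ k, Matrix (ι k) (ι k) R)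
    (hV : ∀ k, d k * V k = V (k + 1) * d' k) (hV₀ : V 0 = 1) (hI : I ≤ I') :
    (h.chainMap h' V hV).f 0 ≫ h'.resolution.π.f 0 =
      h.resolution.π.f 0 ≫ ModuleCat.ofHom (Submodule.mapQ I I' LinearMap.id hI) := by
  refine (congrArg (_ ≫ ·) h'.π_f_zero).trans (Eq.trans ?_ (congrArg (· ≫ _) h.π_f_zero).symm)
  refine ModuleCat.hom_ext (LinearMap.ext fun (r : ι 0 → R) => ?_)
  change (Submodule.Quotient.mk ((r ᵥ* V 0) default) : R ⧸ I') = Submodule.Quotient.mk (r default)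
  rw [hV₀, vecMul_one]

end IsFreeResolution

end Resolution

section Functional

variable {κ κ' : Type} [Fintype κ] [Fintype κ'] (J : Ideal R)

/-- A vector `z` over `R` as the map from a free module to `R ⧸ J` sending the `i`-th basis vector
to the class of `z i`. -/
noncomputable def functional :
    (κ → R) →ₗ[R] (ModuleCat.of R (κ → R) ⟶ ModuleCat.of R (R ⧸ J)) :=
  ModuleCat.homLinearEquiv.symm.toLinearMap ∘ₗ LinearMap.compRight R J.mkQ ∘ₗ
    Fintype.bilinearCombination R R

theorem functional_hom_apply (z r : κ → R) :
    (functional J z).hom r = Submodule.Quotient.mk (r ⬝ᵥ z) := rfl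

theorem functional_surjective : Function.Surjective (functional (κ := κ) J) := fun f => by
  classical
  choose z hz using fun i : κ => Submodule.Quotient.mk_surjective J (f.hom (Pi.single i 1))
  refine ⟨z, ModuleCat.hom_ext (LinearMap.pi_ext' fun i => LinearMap.ext_ring ?_)⟩
  refine (functional_hom_apply J z (Pi.single i 1)).trans ?_
  rw [single_one_dotProduct, hz]
  rfl

theorem functional_eq_zero_iff {z : κ → R} : functional J z = 0 ↔ ∀ i, z i ∈ J := by
  classical
  refine ⟨fun h i => ?_, fun h => ModuleCat.hom_ext (LinearMap.ext fun r => ?_)⟩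
  · have hi := congrArg (fun f => f.hom (Pi.single i 1)) h
    rw [functional_hom_apply, single_one_dotProduct] at hi
    exact (Submodule.Quotient.mk_eq_zero J).1 hi
  · exact (Submodule.Quotient.mk_eq_zero J).2 (sum_mem fun i _ => J.mul_mem_left _ (h i))

theorem functional_eq_iff {z w : κ → R} :
    functional J z = functional J w ↔ ∀ i, z i - w i ∈ J := by
  rw [← sub_eq_zero, ← map_sub, functional_eq_zero_iff]
  rfl

theorem vecMulLinear_comp_functional (z : κ → R) (A : Matrix κ' κ R) :
    ModuleCat.ofHom A.vecMulLinear ≫ functional J z = functional J (A *ᵥ z) := by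
  refine ModuleCat.hom_ext (LinearMap.ext fun r => ?_)
  rw [functional_hom_apply, dotProduct_mulVec]
  rfl

end Functional

section VectorClass

variable [∀ k, Fintype (ι k)] {J : Ideal R}

/-- The vector `z` is a coboundary modulo `J` in the cochain complex with differentials `d k`. -/
def IsCoboundaryMod (J : Ideal R) (d : ∀ k, Matrix (ι (k + 1)) (ι k) R) :
    ∀ k, (ι k → R) → Prop
  | 0, z => ∀ i, z i ∈ J
  | k + 1, z => ∃ y, ∀ i, z i - (d k *ᵥ y) i ∈ J

theorem IsCoboundaryMod.of_forall_mem {k : ℕ} {z : ι k → R} (hz : ∀ i, z i ∈ J) :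
    IsCoboundaryMod J d k z := by
  cases k with
  | zero => exact hz
  | succ k => exact ⟨0, by simpa using hz⟩

variable [Unique (ι 0)]

namespace IsFreeResolution

theorem d_comp_functional (h : IsFreeResolution d I) (k : ℕ) (y : ι k → R) :
    h.resolution.complex.d (k + 1) k ≫ (functional J y : h.resolution.complex.X k ⟶ _) =
      functional J (d k *ᵥ y) :=
  (congrArg (· ≫ functional J y) (h.complex_d k)).trans (vecMulLinear_comp_functional J y (d k))

theorem cocycle_iff (h : IsFreeResolution d I) {j : ℕ} {z : ι j → R} :
    (∀ m, h.resolution.complex.d m j ≫ (functional J z : h.resolution.complex.X j ⟶ _) = 0) ↔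
      ∀ i, (d j *ᵥ z) i ∈ J := by
  rw [← functional_eq_zero_iff, ← h.d_comp_functional]
  refine ⟨fun hm => hm (j + 1), fun hj m => ?_⟩
  by_cases hmj : j + 1 = m
  · exact hmj ▸ hj
  · rw [h.resolution.complex.shape _ _ hmj]
    exact zero_comp

/-- The class in `Ext (R ⧸ I) (R ⧸ J)` of a vector that is a cocycle modulo `J`. -/
noncomputable def vectorClass (h : IsFreeResolution d I) {j : ℕ} (z : ι j → R)
    (hz : ∀ i, (d j *ᵥ z) i ∈ J) :
    ((Ext R (ModuleCat.{u} R) j).obj (op (ModuleCat.of R (R ⧸ I)))).obj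
      (ModuleCat.of R (R ⧸ J)) :=
  extClass h.resolution (functional J z) (h.cocycle_iff.2 hz)

theorem exists_vectorClass_eq (h : IsFreeResolution d I) {j : ℕ}
    (x : ((Ext R (ModuleCat.{u} R) j).obj (op (ModuleCat.of R (R ⧸ I)))).obj
      (ModuleCat.of R (R ⧸ J))) : ∃ z hz, h.vectorClass z hz = x := by
  obtain ⟨ψ, hψ, hx⟩ := exists_extClass_eq h.resolution x
  obtain ⟨z, rfl⟩ := functional_surjective J ψ
  exact ⟨z, h.cocycle_iff.1 hψ, hx⟩

theorem vectorClass_smul (h : IsFreeResolution d I) {j : ℕ} (z : ι j → R)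
    (hz : ∀ i, (d j *ᵥ z) i ∈ J) (s : R) (hs : ∀ i, (d j *ᵥ (s • z)) i ∈ J) :
    h.vectorClass (s • z) hs = s • h.vectorClass z hz := by
  have hψ := map_smul (functional J) s z
  refine Eq.trans ?_ (extClass_smul h.resolution s (functional J z) (h.cocycle_iff.2 hz)
    (hψ ▸ h.cocycle_iff.2 hs))
  unfold vectorClass
  congr 1

theorem vectorClass_eq_zero_iff (h : IsFreeResolution d I) {j : ℕ} (z : ι j → R)
    (hz : ∀ i, (d j *ᵥ z) i ∈ J) : h.vectorClass z hz = 0 ↔ IsCoboundaryMod J d j z := by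
  refine (extClass_eq_zero_iff h.resolution _ (h.cocycle_iff.2 hz)).trans ⟨?_, fun hy => ?_⟩
  · rintro ⟨m, w, hw⟩
    by_cases hm : m + 1 = j
    · subst hm
      obtain ⟨y, rfl⟩ := functional_surjective J w
      exact ⟨y, (functional_eq_iff J).1 (hw.symm.trans (h.d_comp_functional m y))⟩
    · rw [h.resolution.complex.shape _ _ hm, zero_comp] at hw
      exact .of_forall_mem ((functional_eq_zero_iff J).1 hw.symm)
  · cases j with
    | zero => exact ⟨0, 0, comp_zero.trans ((functional_eq_zero_iff J).2 hy).symm⟩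
    | succ m =>
      obtain ⟨y, hy⟩ := hy
      exact ⟨m, functional J y, (h.d_comp_functional m y).trans ((functional_eq_iff J).2 hy).symm⟩

theorem ext_map_vectorClass [DecidableEq (ι 0)] (h : IsFreeResolution d I)
    (h' : IsFreeResolution d' I') (V : ∀ k, Matrix (ι k) (ι k) R)
    (hV : ∀ k, d k * V k = V (k + 1) * d' k) (hV₀ : V 0 = 1) (hI : I ≤ I') {j : ℕ} (z : ι j → R)
    (hz : ∀ i, (d' j *ᵥ z) i ∈ J) (hz' : ∀ i, (d j *ᵥ (V j *ᵥ z)) i ∈ J) :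
    ((Ext R (ModuleCat.{u} R) j).map
        (ModuleCat.ofHom (Submodule.mapQ I I' LinearMap.id hI)).op).app (ModuleCat.of R (R ⧸ J))
      (h'.vectorClass z hz) = h.vectorClass (V j *ᵥ z) hz' := by
  have hf : (h.chainMap h' V hV).f j ≫ (functional J z : h'.resolution.complex.X j ⟶ _) =
      functional J (V j *ᵥ z) :=
    vecMulLinear_comp_functional J z (V j)
  refine (ext_map_extClass h.resolution _ h'.resolution (h.chainMap h' V hV)
    (h.chainMap_augmentation h' V hV hV₀ hI) (functional J z) (h'.cocycle_iff.2 hz)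
    fun m => ?_).trans ?_
  · exact (congrArg (_ ≫ ·) hf).trans (h.cocycle_iff.2 hz' m)
  · unfold vectorClass
    congr 1

end IsFreeResolution

end VectorClass

end FrobeniusModule

namespace FrobeniusModule

open CategoryTheory Opposite Matrix

universe u

variable {R : Type u} [CommRing R]

theorem exists_isFreeResolution [IsNoetherianRing R] (I : Ideal R) :
    ∃ (n : ℕ → ℕ) (_ : Unique (Fin (n 0))) (d : ∀ k, Matrix (Fin (n (k + 1))) (Fin (n k)) R),
      IsFreeResolution (ι := fun k => Fin (n k)) d I := by
  choose m g hg using fun N : Σ n : ℕ, Submodule R (Fin n → R) =>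
    Submodule.fg_iff_exists_fin_generating_family.1 (IsNoetherian.noetherian N.2)
  have hrange (N : Σ n : ℕ, Submodule R (Fin n → R)) :
      LinearMap.range (of (g N)).vecMulLinear = N.2 :=
    (range_vecMulLinear _).trans (hg N)
  let N : ℕ → Σ n : ℕ, Submodule R (Fin n → R) := fun k => Nat.rec
    ⟨1, Submodule.comap (LinearMap.proj default) I⟩
    (fun _ N => ⟨m N, LinearMap.ker (of (g N)).vecMulLinear⟩) k
  let : Unique (Fin (N 0).1) := inferInstanceAs (Unique (Fin 1))
  exact ⟨fun k => (N k).1, this, fun k => of (g (N k)), hrange (N 0),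
    fun k => (hrange (N (k + 1))).symm⟩

section FrobeniusPullback

variable {p : ℕ} [ExpChar R p]

theorem frobeniusPow_zero {κ κ' : Type*} (e : ℕ) : frobeniusPow p e (0 : Matrix κ κ' R) = 0 :=
  Matrix.map_zero _ (map_zero _)

theorem frobeniusPow_one {κ : Type*} [DecidableEq κ] (e : ℕ) :
    frobeniusPow p e (1 : Matrix κ κ R) = 1 :=
  Matrix.map_one _ (map_zero _) (map_one _)

theorem row_frobeniusPow {κ κ' : Type*} (e : ℕ) (A : Matrix κ κ' R) :
    (frobeniusPow p e A).row = iter (entrywiseFrobenius R κ' p) e ∘ A.row :=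
  funext fun _ => by rw [Function.comp_apply, iter_entrywiseFrobenius]; rfl

theorem range_vecMulLinear_frobeniusPow {κ κ' : Type*} [Fintype κ] (e : ℕ) (A : Matrix κ κ' R) :
    LinearMap.range (frobeniusPow p e A).vecMulLinear =
      bracket p e (LinearMap.range A.vecMulLinear) := by
  rw [range_vecMulLinear, range_vecMulLinear, bracket, frobeniusSpan_span, row_frobeniusPow,
    Set.range_comp]

theorem ker_vecMulLinear_eq_relations {κ κ' : Type*} [Fintype κ] (A : Matrix κ κ' R) :
    LinearMap.ker A.vecMulLinear = relations R A.row :=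
  SetLike.ext fun r => by
    rw [LinearMap.mem_ker, vecMulLinear_apply, vecMul_eq_sum, mem_relations]; rfl

theorem ker_vecMulLinear_frobeniusPow {κ κ' : Type} [Fintype κ] [Finite κ']
    (hflat : ReflectsRelations (LinearMap.frobenius R R p)) (e : ℕ) (A : Matrix κ κ' R) :
    LinearMap.ker (frobeniusPow p e A).vecMulLinear =
      bracket p e (LinearMap.ker A.vecMulLinear) := by
  rw [ker_vecMulLinear_eq_relations, ker_vecMulLinear_eq_relations, row_frobeniusPow]
  refine le_antisymm (hflat.entrywiseFrobenius.iterate e A.row) (frobeniusSpan_le.2 fun r hr => ?_)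
  exact (linearCombination_iter _ e A.row r).trans (by rw [LinearMap.mem_ker.1 hr, map_zero])

theorem bracket_comap_proj {κ : Type*} [Unique κ] (e : ℕ) (I : Ideal R) :
    bracket p e (Submodule.comap (LinearMap.proj (default : κ)) I) =
      Submodule.comap (LinearMap.proj default) (idealBracket p e I) := by
  have hproj : Function.Bijective (LinearMap.proj (default : κ) : (κ → R) →ₗ[R] R) :=
    (LinearEquiv.funUnique κ R R).bijective
  apply Submodule.map_injective_of_injective hproj.injective
  rw [map_proj_bracket, Submodule.map_comap_eq_of_surjective hproj.surjective,
    Submodule.map_comap_eq_of_surjective hproj.surjective]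

theorem IsFreeResolution.frobeniusPullback {ι : ℕ → Type} [∀ k, Fintype (ι k)] [Unique (ι 0)]
    {d : ∀ k, Matrix (ι (k + 1)) (ι k) R} {I : Ideal R} (h : IsFreeResolution d I)
    (hflat : ReflectsRelations (LinearMap.frobenius R R p)) (e : ℕ) :
    IsFreeResolution (fun k => frobeniusPow p e (d k)) (idealBracket p e I) where
  range_eq := by rw [range_vecMulLinear_frobeniusPow, h.range_eq, bracket_comap_proj]
  exact k := by
    rw [ker_vecMulLinear_frobeniusPow hflat, h.exact, range_vecMulLinear_frobeniusPow]

theorem exists_mul_eq_of_row_mem_range {κ κ' κ'' : Type*} [Fintype κ] {A : Matrix κ'' κ' R}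
    {B : Matrix κ κ' R} (h : ∀ i, A i ∈ LinearMap.range B.vecMulLinear) :
    ∃ X : Matrix κ'' κ R, A = X * B := by
  choose s hs using h
  exact ⟨of s, funext fun i => (hs i).symm⟩

theorem IsFreeResolution.exists_frobeniusPow_one_mul_eq {ι : ℕ → Type} [∀ k, Fintype (ι k)]
    [∀ k, DecidableEq (ι k)] [Unique (ι 0)] {d : ∀ k, Matrix (ι (k + 1)) (ι k) R} {I : Ideal R}
    (h : IsFreeResolution d I) : ∃ T : ∀ k, Matrix (ι k) (ι k) R,
      T 0 = 1 ∧ ∀ k, frobeniusPow p 1 (d k) * T k = T (k + 1) * d k := by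
  let Extends (k : ℕ) (X : Matrix (ι k) (ι k) R) : Prop :=
    ∃ Y : Matrix (ι (k + 1)) (ι (k + 1)) R, frobeniusPow p 1 (d k) * X = Y * d k
  have hzero : Extends 0 1 := by
    refine exists_mul_eq_of_row_mem_range fun i => ?_
    rw [h.range_eq, Matrix.mul_one]
    exact I.pow_mem_of_mem (h.row_zero_mem i) _ (pow_pos (expChar_pos R p) 1)
  have hsucc (k : ℕ) (X : {X // Extends k X}) : ∃ Y : {Y // Extends (k + 1) Y},
      frobeniusPow p 1 (d k) * X.1 = Y.1 * d k := by
    obtain ⟨X, Y, hY⟩ := X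
    refine ⟨⟨Y, exists_mul_eq_of_row_mem_range fun i => ?_⟩, hY⟩
    rw [← h.exact, LinearMap.mem_ker, vecMulLinear_apply]
    have hmul : frobeniusPow p 1 (d (k + 1)) * Y * d k = 0 := by
      rw [Matrix.mul_assoc, ← hY, ← Matrix.mul_assoc, ← frobeniusPow_mul, h.mul_eq_zero,
        frobeniusPow_zero, Matrix.zero_mul]
    exact congrFun hmul i
  choose next hnext using hsucc
  let T : ∀ k, {X // Extends k X} := fun k => Nat.rec ⟨1, hzero⟩ next k
  exact ⟨fun k => (T k).1, rfl, fun k => hnext k (T k)⟩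

end FrobeniusPullback

theorem exists_frobeniusComplex_isFreeResolution [IsNoetherianRing R] (p : ℕ) [ExpChar R p]
    (I : Ideal R) : ∃ (C : FrobeniusComplex R p) (_ : Unique (C.ι 0)),
      IsFreeResolution C.d I ∧ C.T 0 = 1 := by
  obtain ⟨n, hn, d, hd⟩ := exists_isFreeResolution I
  obtain ⟨T, hT₀, hT⟩ := hd.exists_frobeniusPow_one_mul_eq (p := p)
  exact ⟨⟨fun k => Fin (n k), d, T, hd.mul_eq_zero, hT⟩, hn, hd, hT₀⟩

section LocalCohomology

variable {p : ℕ} [ExpChar R p] {C : FrobeniusComplex R p}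

theorem transition_one {κ : Type*} [Fintype κ] [DecidableEq κ] (e k : ℕ) :
    transition p (1 : Matrix κ κ R) e k = 1 := by
  induction k with
  | zero => rfl
  | succ k ih =>
    rw [transition, ih, Matrix.mul_one, frobeniusPow_one]

theorem isCoboundaryMod_frobeniusPow_iff {J : Ideal R} {e k : ℕ} {z : C.ι k → R} :
    IsCoboundaryMod J (fun k => frobeniusPow p e (C.d k)) k z ↔
      ∃ y, ∀ i, z i - (frobeniusPow p e (C.pad.d k) *ᵥ y) i ∈ J := by
  cases k with
  | zero =>
    have : IsEmpty (C.pad.ι 0) := inferInstanceAs (IsEmpty Empty)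
    have hd (y : C.pad.ι 0 → R) (i : C.ι 0) : (frobeniusPow p e (C.pad.d 0) *ᵥ y) i = 0 := by
      simp [mulVec, dotProduct, Finset.univ_eq_empty]
    simp only [IsCoboundaryMod, hd, sub_zero, exists_const]
  | succ k => rfl

theorem mem_exactLocus_pad_pad_iff {J : Ideal R} {j : ℕ} {P : PrimeSpectrum R} :
    P ∈ C.pad.pad.exactLocus J (j + 1) ↔
      ∀ (e : ℕ) (z : C.ι j → R), (∀ i, (frobeniusPow p e (C.d j) *ᵥ z) i ∈ J) →
        ∃ s ∉ P.asIdeal, ∃ l, IsCoboundaryMod J (fun k => frobeniusPow p (e + l) (C.d k)) j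
          (transition p (C.T j) e l *ᵥ (s • z)) := by
  simp only [isCoboundaryMod_frobeniusPow_iff, mulVec_smul]
  rfl

variable [Unique (C.ι 0)] {I : Ideal R}

theorem extTransition_vectorClass (h : IsFreeResolution C.d I) (hT : C.T 0 = 1)
    (hflat : ReflectsRelations (LinearMap.frobenius R R p)) {J : Ideal R} {e j : ℕ} (l : ℕ)
    (z : C.ι j → R) (hz : ∀ i, (frobeniusPow p e (C.d j) *ᵥ z) i ∈ J) :
    extTransition (idealBracket_antitone (p := p) I) j (ModuleCat.of R (R ⧸ J)) e l
        ((h.frobeniusPullback hflat e).vectorClass z hz) = 0 ↔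
      IsCoboundaryMod J (fun k => frobeniusPow p (e + l) (C.d k)) j
        (transition p (C.T j) e l *ᵥ z) := by
  have hV (k : ℕ) := (transition_mul_frobeniusPow (C.frobeniusPow_d_mul k) e l).symm
  have hz' : ∀ i, (frobeniusPow p (e + l) (C.d j) *ᵥ (transition p (C.T j) e l *ᵥ z)) i ∈ J := by
    rw [mulVec_mulVec, hV, ← mulVec_mulVec]
    exact fun i => sum_mem fun k _ => J.mul_mem_left _ (hz k)
  rw [← (h.frobeniusPullback hflat (e + l)).vectorClass_eq_zero_iff _ hz', extTransition,
    (h.frobeniusPullback hflat (e + l)).ext_map_vectorClass (h.frobeniusPullback hflat e)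
      (fun k => transition p (C.T k) e l) hV (by rw [hT, transition_one]) _ z hz hz']

theorem notMem_support_localCohomology_iff_mem_exactLocus [IsNoetherianRing R] (hp : 1 < p)
    (h : IsFreeResolution C.d I) (hT : C.T 0 = 1)
    (hflat : ReflectsRelations (LinearMap.frobenius R R p)) (J : Ideal R) (j : ℕ)
    (P : PrimeSpectrum R) :
    P ∉ Module.support R ((localCohomology I j).obj (ModuleCat.of R (R ⧸ J))) ↔
      P ∈ C.pad.pad.exactLocus J (j + 1) := by
  have hsmul {e : ℕ} {z : C.ι j → R} (hz : ∀ i, (frobeniusPow p e (C.d j) *ᵥ z) i ∈ J) (s : R) :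
      ∀ i, (frobeniusPow p e (C.d j) *ᵥ (s • z)) i ∈ J := by
    rw [mulVec_smul]
    exact fun i => J.mul_mem_left s (hz i)
  rw [notMem_support_localCohomology_iff (idealBracket_antitone (p := p) I)
    (le_radical_idealBracket I) (exists_idealBracket_le_pow hp I), mem_exactLocus_pad_pad_iff]
  refine forall_congr' fun e => ⟨fun H z hz => ?_, fun H x => ?_⟩
  · obtain ⟨s, hs, l, hl⟩ := H ((h.frobeniusPullback hflat e).vectorClass z hz)
    rw [← IsFreeResolution.vectorClass_smul _ z hz s (hsmul hz s)] at hl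
    exact ⟨s, hs, l, (extTransition_vectorClass h hT hflat l _ _).1 hl⟩
  · obtain ⟨z, hz, rfl⟩ := (h.frobeniusPullback hflat e).exists_vectorClass_eq x
    obtain ⟨s, hs, l, hl⟩ := H z hz
    refine ⟨s, hs, l, ?_⟩
    rw [← IsFreeResolution.vectorClass_smul _ z hz s (hsmul hz s)]
    exact (extTransition_vectorClass h hT hflat l _ _).2 hl

end LocalCohomology

theorem koszulExact_of_isWeaklyRegular {f₁ f₂ : R}
    (h : RingTheory.Sequence.IsWeaklyRegular R [f₁, f₂]) : KoszulExact f₁ f₂ R := by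
  rw [RingTheory.Sequence.isWeaklyRegular_cons_iff,
    RingTheory.Sequence.isWeaklyRegular_cons_iff] at h
  obtain ⟨h₁, h₂, -⟩ := h
  intro u v huv
  have hv : (Submodule.Quotient.mk v : QuotSMulTop f₁ R) = 0 := by
    refine h₂.right_eq_zero_of_smul ?_
    rw [← Submodule.Quotient.mk_smul, Submodule.Quotient.mk_eq_zero,
      Submodule.mem_smul_pointwise_iff_exists]
    exact ⟨-u, trivial, by rw [smul_neg, neg_eq_iff_add_eq_zero, huv]⟩
  rw [Submodule.Quotient.mk_eq_zero, Submodule.mem_smul_pointwise_iff_exists] at hv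
  obtain ⟨t, -, rfl⟩ := hv
  rw [smul_comm, ← smul_add] at huv
  have hu := eq_neg_of_add_eq_zero_left (h₁.right_eq_zero_of_smul huv)
  exact ⟨-t, by rw [hu, smul_neg], by rw [smul_neg, neg_neg]⟩

theorem isRegularRing_of_isRegularRingStmt (h : IsRegularRingStmt R) : IsRegularRing R := by
  have := h.1
  refine isRegularRing_iff.2 fun P _ => ?_
  have := IsLocalization.isNoetherianRing P.primeCompl (Localization.AtPrime P) inferInstance
  exact (IsRegularLocalRing.iff_finrank_cotangentSpace _).2 (h.2 P).symm

end FrobeniusModule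

open FrobeniusModule in
theorem stmt_18_general {R : Type*} [CommRing R] [IsNoetherianRing R] (p : ℕ) [Fact p.Prime]
    [CharP R p] (hflat : ReflectsRelations (LinearMap.frobenius R R p)) {f₁ f₂ : R}
    (hseq : RingTheory.Sequence.IsWeaklyRegular R [f₁, f₂]) (I : Ideal R) (j : ℕ) :
    IsClosed (Module.support R
      ((localCohomology I j).obj (ModuleCat.of R (R ⧸ Ideal.span {f₁, f₂})))) := by
  have hp : 1 < p := (Fact.out : p.Prime).one_lt
  have hf₁ : IsSMulRegular R f₁ := ((RingTheory.Sequence.isWeaklyRegular_cons_iff _ _ _).1 hseq).1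
  obtain ⟨C, _, hC, hT⟩ := exists_frobeniusComplex_isFreeResolution p I
  convert (C.pad.pad.isOpen_exactLocus hp hflat (fun _ => hf₁.right_eq_zero_of_smul)
    (koszulExact_of_isWeaklyRegular hseq) j).isClosed_compl
  ext P
  rw [Set.mem_compl_iff, ← notMem_support_localCohomology_iff_mem_exactLocus hp hC hT hflat,
    not_not]

/-- **Main theorem.** Let `R` be a noetherian regular ring of prime characteristic `p` and
`f1, f2` a regular sequence in `R`. Then `Supp (H^j_I (R/(f1,f2)))` is Zariski-closed for
every ideal `I` and every integer `j`. -/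
theorem stmt_18 {R : Type} [CommRing R] (p : ℕ) [Fact p.Prime] [CharP R p]
    (hreg : IsRegularRingStmt R) (f1 f2 : R)
    (hseq : RingTheory.Sequence.IsRegular R [f1, f2]) (I : Ideal R) (j : ℕ) :
    IsClosed (Module.support R
      ((localCohomology I j).obj (ModuleCat.of R (R ⧸ Ideal.span {f1, f2})))) := by
  have := hreg.1
  have := FrobeniusModule.isRegularRing_of_isRegularRingStmt hreg
  exact stmt_18_general p (FrobeniusModule.reflectsRelations_frobenius_of_isRegularRing p)
    hseq.toIsWeaklyRegular I j
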